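/- Let 1 < q⃗ < ∞ and 1 < u ≤ ∞. Then for every sequence (f_j)_{j=1}^∞ of measurable functions on ℝ^n one has the vector-valued Fefferman–Stein maximal inequality ‖(Σ_{j=1}^∞ (Mf_j)^u)^{1/u}‖_{L^{q⃗}(ℝ^n)} ≤ C‖(Σ_{j=1}^∞ |f_j|^u)^{1/u}‖_{L^{q⃗}(ℝ^n)} (with Σ(·)^u replaced by sup_j when u=∞); in particular ‖Mf‖_{L^{q⃗}(ℝ^n)} ≤ C‖f‖_{L^{q⃗}(ℝ^n)} for every measurable f, where C does not depend on f or (f_j). -/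

import Mathlib

/-!
The proof reduces the inequality to a weighted estimate in one variable.

On the line the uncentred maximal operator is bounded on `L^p(μ)` for every s-finite measure `μ`
(`FSMax.strong_type`), because a finite family of intervals has a subfamily with the same union and
overlap at most two. Call `a` an `A₁` weight if `M a ≤ K * a` everywhere. For `a, b ∈ A₁`, a
pointwise bound of `M f` by a composition of the maximal operators with respect to the measures
whose densities are `a * b ^ (1 - p)` and its dual weight (Lerner's argument) shows that `M` is
bounded on `L^p` with weight `a * b ^ (1 - p)` (`FSMax.weighted`).

Rubio de Francia's iteration (`FSMax.rubio`) then gives extrapolation for this class of weights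
(`FSMax.extrap`): an inequality between two functions that holds for one exponent `r > 1` and all
weights `a * b ^ (1 - r)` holds for every exponent `p > 1` and all weights `a * b ^ (1 - p)`. For
`ℓ^u`-valued functions the inequality with exponent `u < ∞` follows by summing the scalar one; for
values in a mixed-norm space, one more variable with exponent `r` is added by Tonelli's theorem
in the inequality with exponent `r`. Extrapolation frees the exponent each time (`FSMax.vector_weighted`,
`FSMax.mixed_weighted`), so the one-variable maximal operator is bounded in the last variable for
functions with values in the mixed-norm space of the other variables and `ℓ^u`.

Applying this to each variable in turn bounds the iterated maximal operator `FSMax.S`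
(`FSMax.strong_bound`), which dominates the maximal operator over cubes up to the factor `2 ^ n`
(`FSMax.maximalE_le`). The scalar inequality is the case of the sequence `f, 0, 0, …`.
-/

open MeasureTheory ENNReal NNReal Set Filter

noncomputable section

namespace LMM

/-- `L^p` "norm" (with the usual `essSup` convention for `p = ∞`)
of an `ℝ≥0∞`-valued function on `ℝ` with respect to a measure `μ`. -/
def lpNormE (p : ℝ≥0∞) (g : ℝ → ℝ≥0∞) (μ : Measure ℝ) : ℝ≥0∞ :=
  if p = ∞ then essSup g μ else (∫⁻ t, g t ^ p.toReal ∂μ) ^ (1 / p.toReal)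

/-- Iterated mixed Lebesgue norm of an `ℝ≥0∞`-valued function on `ℝ^n`:
the innermost integration is in the variable `x 1` with exponent `p 1`,
the outermost in `x n` with exponent `p n`. -/
def mixedNorm : (n : ℕ) → (Fin n → ℝ≥0∞) → ((Fin n → ℝ) → ℝ≥0∞) → ℝ≥0∞
  | 0, _, g => g finZeroElim
  | (n + 1), p, g =>
      lpNormE (p (Fin.last n))
        (fun t => mixedNorm n (fun i => p i.castSucc) (fun x => g (Fin.snoc x t)))
        volume

/-- Mixed Lebesgue norm of `g` restricted to a set `S`. -/
def mixedNormOn (n : ℕ) (p : Fin n → ℝ≥0∞) (g : (Fin n → ℝ) → ℝ≥0∞)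
    (S : Set (Fin n → ℝ)) : ℝ≥0∞ :=
  mixedNorm n p (S.indicator g)

/-- The (closed) cube centered at `c` with side length `2 * r`. -/
def cubeAt {n : ℕ} (c : Fin n → ℝ) (r : ℝ) : Set (Fin n → ℝ) := {x | ∀ i, |x i - c i| ≤ r}

/-- The cube `Q(0, r)` centered at the origin with side length `2 * r`. -/
def cube0 (n : ℕ) (r : ℝ) : Set (Fin n → ℝ) := cubeAt 0 r

/-- Euclidean norm on `Fin n → ℝ`. -/
def euclNorm {n : ℕ} (x : Fin n → ℝ) : ℝ := Real.sqrt (∑ i, x i ^ 2)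

/-- The closed Euclidean ball of radius `r` centered at the origin. -/
def closedBall0 (n : ℕ) (r : ℝ) : Set (Fin n → ℝ) := {x | euclNorm x ≤ r}

/-- The local mixed Morrey-type quasi-norm `‖·‖_{LM_{p θ, w}}` of an
`ℝ≥0∞`-valued function. -/
def LMnormE (n : ℕ) (p : Fin n → ℝ≥0∞) (θ : ℝ≥0∞) (w : ℝ → ℝ)
    (g : (Fin n → ℝ) → ℝ≥0∞) : ℝ≥0∞ :=
  lpNormE θ (fun r => ENNReal.ofReal (w r) * mixedNormOn n p g (cube0 n r))
    (volume.restrict (Ioi (0 : ℝ)))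

/-- The local mixed Morrey-type quasi-norm of a real-valued function. -/
def LMnorm (n : ℕ) (p : Fin n → ℝ≥0∞) (θ : ℝ≥0∞) (w : ℝ → ℝ)
    (f : (Fin n → ℝ) → ℝ) : ℝ≥0∞ :=
  LMnormE n p θ w (fun x => (‖f x‖₊ : ℝ≥0∞))

/-- `1/p₁ + ⋯ + 1/pₙ`. -/
def sumInv {n : ℕ} (p : Fin n → ℝ≥0∞) : ℝ := ∑ i, ((p i)⁻¹).toReal

/-- Hardy–Littlewood maximal operator (over cubes) of an `ℝ≥0∞`-valued function. -/
def maximalE {n : ℕ} (g : (Fin n → ℝ) → ℝ≥0∞) (x : Fin n → ℝ) : ℝ≥0∞ :=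
  ⨆ (c : Fin n → ℝ) (r : ℝ) (_ : 0 < r) (_ : x ∈ cubeAt c r),
    (volume (cubeAt c r))⁻¹ * ∫⁻ y in cubeAt c r, g y

/-- Hardy–Littlewood maximal operator of a real-valued function. -/
def maximal {n : ℕ} (f : (Fin n → ℝ) → ℝ) : (Fin n → ℝ) → ℝ≥0∞ :=
  maximalE (fun y => (‖f y‖₊ : ℝ≥0∞))

/-- Weighted `L^θ` norm `‖v · g‖_{L^θ(0,∞)}` of an `ℝ≥0∞`-valued function. -/
def wLpE (θ : ℝ≥0∞) (v : ℝ → ℝ) (g : ℝ → ℝ≥0∞) : ℝ≥0∞ :=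
  lpNormE θ (fun r => ENNReal.ofReal (v r) * g r) (volume.restrict (Ioi (0 : ℝ)))

/-- The dual Hardy operator `H* g (r) = ∫_r^∞ g`. -/
def dualHardyE (g : ℝ → ℝ≥0∞) (r : ℝ) : ℝ≥0∞ := ∫⁻ t in Ioi r, g t

/-- The Hardy operator `H g (r) = ∫_0^r g`. -/
def hardyE (g : ℝ → ℝ≥0∞) (r : ℝ) : ℝ≥0∞ := ∫⁻ t in Ioo 0 r, g t

/-- The weight `v̂₁(r) = r^{-(1/p₁+⋯+1/pₙ)-1} w(r)`. -/
def vhat1 {n : ℕ} (p : Fin n → ℝ≥0∞) (w : ℝ → ℝ) (r : ℝ) : ℝ :=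
  r ^ (-(sumInv p) - 1) * w r

/-- The weight `v̂₂(r) = r^{-(1/p₁+⋯+1/pₙ)} w(r)`. -/
def vhat2 {n : ℕ} (p : Fin n → ℝ≥0∞) (w : ℝ → ℝ) (r : ℝ) : ℝ :=
  r ^ (-(sumInv p)) * w r

/-- Boundedness of the dual Hardy operator `H*` from `L_{θ,v₁}(0,∞)` to `L_{θ,v₂}(0,∞)`. -/
def DualHardyBounded (θ : ℝ≥0∞) (v1 v2 : ℝ → ℝ) : Prop :=
  ∃ C : ℝ≥0, ∀ g : ℝ → ℝ≥0∞, Measurable g → wLpE θ v2 (dualHardyE g) ≤ C * wLpE θ v1 g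

/-- Boundedness of the Hardy operator `H` from `L_{θ,v₁}(0,∞)` to `L_{θ,v₂}(0,∞)`. -/
def HardyBounded (θ : ℝ≥0∞) (v1 v2 : ℝ → ℝ) : Prop :=
  ∃ C : ℝ≥0, ∀ g : ℝ → ℝ≥0∞, Measurable g → wLpE θ v2 (hardyE g) ≤ C * wLpE θ v1 g

/-- The class `Ω_θ`. -/
def OmegaTheta (θ : ℝ≥0∞) (w : ℝ → ℝ) : Prop :=
  Measurable w ∧ (∀ r, 0 ≤ w r) ∧
    ¬ (∀ᵐ r ∂(volume.restrict (Ioi (0 : ℝ))), w r = 0) ∧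
    ∃ t > (0 : ℝ), lpNormE θ (fun r => ENNReal.ofReal (w r)) (volume.restrict (Ioi t)) < ∞

/-- The class `Ω_{p,θ}`. -/
def OmegaPTheta {n : ℕ} (p : Fin n → ℝ≥0∞) (θ : ℝ≥0∞) (w : ℝ → ℝ) : Prop :=
  Measurable w ∧ (∀ r, 0 ≤ w r) ∧
    ¬ (∀ᵐ r ∂(volume.restrict (Ioi (0 : ℝ))), w r = 0) ∧
    (∃ t > (0 : ℝ), lpNormE θ (fun r => ENNReal.ofReal (w r)) (volume.restrict (Ioi t)) < ∞) ∧
    (∃ t > (0 : ℝ), lpNormE θ (fun r => ENNReal.ofReal (w r * r ^ sumInv p))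
        (volume.restrict (Ioo (0 : ℝ) t)) < ∞)

/-- The doubling condition `C⁻¹ w(r) ≤ w(2r) ≤ C w(r)` for all `r > 0`. -/
def Doubling (w : ℝ → ℝ) : Prop :=
  ∃ C : ℝ, 0 < C ∧ ∀ r > (0 : ℝ), C⁻¹ * w r ≤ w (2 * r) ∧ w (2 * r) ≤ C * w r

/-- Conjugate exponent in `ℝ≥0∞`. -/
def conjE (p : ℝ≥0∞) : ℝ≥0∞ := (1 - p⁻¹)⁻¹

/-- `A` is a `(p', w, R)`-block: supported in `Q(0,R)` with `‖A‖_{L^{p'}} ≤ w(R)`. -/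
def IsBlock {n : ℕ} (p' : Fin n → ℝ≥0∞) (w : ℝ → ℝ) (R : ℝ)
    (A : (Fin n → ℝ) → ℝ) : Prop :=
  Measurable A ∧ (∀ x ∉ cube0 n R, A x = 0) ∧
    mixedNorm n p' (fun x => (‖A x‖₊ : ℝ≥0∞)) ≤ ENNReal.ofReal (w R)

/-- `ℓ^q` norm of a `ℤ`-indexed real sequence. -/
def ellNorm (q : ℝ≥0∞) (a : ℤ → ℝ) : ℝ≥0∞ :=
  if q = ∞ then ⨆ j, (‖a j‖₊ : ℝ≥0∞)
  else (∑' j, (‖a j‖₊ : ℝ≥0∞) ^ q.toReal) ^ (1 / q.toReal)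

/-- Membership in the local block space `LH_{p' θ', w}`. -/
def MemLH {n : ℕ} (p' : Fin n → ℝ≥0∞) (θ' : ℝ≥0∞) (w : ℝ → ℝ)
    (g : (Fin n → ℝ) → ℝ) : Prop :=
  ∃ (lam : ℤ → ℝ) (A : ℤ → (Fin n → ℝ) → ℝ),
    (∀ j, IsBlock p' w ((2 : ℝ) ^ j) (A j)) ∧
    (∀ᵐ x, HasSum (fun j => lam j * A j x) (g x)) ∧ ellNorm θ' lam < ∞

/-- The local block space norm `‖g‖_{LH_{p' θ', w}}`. -/
def LHnorm {n : ℕ} (p' : Fin n → ℝ≥0∞) (θ' : ℝ≥0∞) (w : ℝ → ℝ)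
    (g : (Fin n → ℝ) → ℝ) : ℝ≥0∞ :=
  ⨅ (lam : ℤ → ℝ) (A : ℤ → (Fin n → ℝ) → ℝ)
    (_ : (∀ j, IsBlock p' w ((2 : ℝ) ^ j) (A j)) ∧
         ∀ᵐ x, HasSum (fun j => lam j * A j x) (g x)),
    ellNorm θ' lam

/-- `(∫_0^∞ (r^{-λ} A(r))^q dr/r)^{1/q}` (essential supremum when `q = ∞`). -/
def morreyScale (q : ℝ≥0∞) (lam : ℝ) (A : ℝ → ℝ≥0∞) : ℝ≥0∞ :=
  if q = ∞ then essSup (fun r => ENNReal.ofReal (r ^ (-lam)) * A r) (volume.restrict (Ioi (0 : ℝ)))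
  else (∫⁻ r in Ioi (0 : ℝ),
      (ENNReal.ofReal (r ^ (-lam)) * A r) ^ q.toReal * ENNReal.ofReal r⁻¹) ^ (1 / q.toReal)

/-- The local mixed Morrey norm `‖·‖_{LM^λ_{p,q}}` (cubes `Q(0,r)`). -/
def LMlamQ (n : ℕ) (p : Fin n → ℝ≥0∞) (q : ℝ≥0∞) (lam : ℝ)
    (g : (Fin n → ℝ) → ℝ≥0∞) : ℝ≥0∞ :=
  morreyScale q lam (fun r => mixedNormOn n p g (cube0 n r))

/-- The local mixed Morrey norm `‖·‖_{LM^λ_{p,q}}` (balls `B(0,r)`). -/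
def LMlamB (n : ℕ) (p : Fin n → ℝ≥0∞) (q : ℝ≥0∞) (lam : ℝ)
    (g : (Fin n → ℝ) → ℝ≥0∞) : ℝ≥0∞ :=
  morreyScale q lam (fun r => mixedNormOn n p g (closedBall0 n r))

/-- Condition (★) on the auxiliary exponent vector `s`. -/
def StarCond {n : ℕ} (p s : Fin n → ℝ≥0∞) (w : ℝ → ℝ) : Prop :=
  ∃ C : ℝ, ∀ r : ℝ, 0 < r →
    (∫⁻ t in Ioi r,
        ENNReal.ofReal (t ^ (sumInv s / (n : ℝ) - sumInv p / (n : ℝ) - 1) / w (r * t)))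
      ≤ ENNReal.ofReal (C * (r ^ (sumInv p / (n : ℝ) - sumInv s / (n : ℝ)) / w r))

/-- `ℓ^u`-norm (`sup` for `u = ∞`) of an `ℕ`-indexed family in `ℝ≥0∞`. -/
def vecNorm (u : ℝ≥0∞) (a : ℕ → ℝ≥0∞) : ℝ≥0∞ :=
  if u = ∞ then ⨆ j, a j else (∑' j, a j ^ u.toReal) ^ (1 / u.toReal)

/-- Operator norm of the functional `g ↦ ∫ f g` on the local block space. -/
def dualNormOf (n : ℕ) (p : Fin n → ℝ≥0∞) (θ : ℝ≥0∞) (w : ℝ → ℝ)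
    (f : (Fin n → ℝ) → ℝ) : ℝ≥0∞ :=
  ⨆ (g : (Fin n → ℝ) → ℝ) (_ : MemLH (fun i => conjE (p i)) (conjE θ) w g)
    (_ : LHnorm (fun i => conjE (p i)) (conjE θ) w g ≤ 1),
    ENNReal.ofReal |∫ x, f x * g x|

/-- `sup_{t>0} |e^{tΔ}f(x)|` for a (locally integrable) function `f`. -/
def heatSup (n : ℕ) (f : (Fin n → ℝ) → ℝ) (x : Fin n → ℝ) : ℝ≥0∞ :=
  ⨆ (t : ℝ) (_ : 0 < t),
    ENNReal.ofReal
      |∫ y, (4 * Real.pi * t) ^ (-(n : ℝ) / 2) *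
          Real.exp (-(∑ i, (x i - y i) ^ 2) / (4 * t)) * f y|

/-- The Schwartz seminorm `ρ_N`. -/
def rhoN {n : ℕ} (N : ℕ) (φ : SchwartzMap (Fin n → ℝ) ℝ) : ℝ≥0∞ :=
  ∑ k ∈ Finset.range (N + 1),
    ⨆ x : Fin n → ℝ, ENNReal.ofReal ((1 + euclNorm x) ^ N * ‖iteratedFDeriv ℝ k (⇑φ) x‖)

/-- The grand maximal operator of a (locally integrable) function. -/
def grandMaxF {n : ℕ} (N : ℕ) (f : (Fin n → ℝ) → ℝ) (x : Fin n → ℝ) : ℝ≥0∞ :=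
  ⨆ (φ : SchwartzMap (Fin n → ℝ) ℝ) (_ : rhoN N φ ≤ 1) (t : ℝ) (_ : 0 < t),
    ENNReal.ofReal |∫ y, t ^ (-(n : ℝ)) * φ (fun i => (x i - y i) / t) * f y|

/-- The `n`-dimensional Hardy operator `Hf(x) = |x|^{-n} ∫_{|y|<|x|} f(y) dy`. -/
def hardyOp {n : ℕ} (f : (Fin n → ℝ) → ℝ) (x : Fin n → ℝ) : ℝ :=
  (euclNorm x) ^ (-(n : ℝ)) * ∫ y in {y : Fin n → ℝ | euclNorm y < euclNorm x}, f y

end LMM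

open LMM

namespace FSMax

/-! ### The maximal operator on the line -/

/-- The interval `(p.1, p.2)` with rational endpoints; these intervals form a countable family,
so suprema over them are measurable. -/
def QI (p : ℚ × ℚ) : Set ℝ := Ioo (p.1 : ℝ) (p.2 : ℝ)

lemma measurableSet_QI (p : ℚ × ℚ) : MeasurableSet (QI p) := measurableSet_Ioo

/-- The average of `f` over `QI p` with respect to `μ`; it is `0` when `QI p` has measure `0`
or `∞`. -/
def avg (μ : Measure ℝ) (f : ℝ → ℝ≥0∞) (p : ℚ × ℚ) : ℝ≥0∞ :=
  (μ (QI p))⁻¹ * ∫⁻ s in QI p, f s ∂μ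

/-- The uncentred maximal function on `ℝ` with respect to `μ`, over open intervals with rational
endpoints. -/
def MM (μ : Measure ℝ) (f : ℝ → ℝ≥0∞) (t : ℝ) : ℝ≥0∞ :=
  ⨆ p : ℚ × ℚ, (QI p).indicator (fun _ => avg μ f p) t

lemma avg_le_MM {μ : Measure ℝ} {f : ℝ → ℝ≥0∞} {p : ℚ × ℚ} {t : ℝ} (ht : t ∈ QI p) :
    avg μ f p ≤ MM μ f t := by
  have h := le_iSup (fun p : ℚ × ℚ => (QI p).indicator (fun _ => avg μ f p) t) p
  simp only [indicator_of_mem ht] at h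
  exact h

lemma MM_le {μ : Measure ℝ} {f : ℝ → ℝ≥0∞} {t : ℝ} {c : ℝ≥0∞}
    (h : ∀ p, t ∈ QI p → avg μ f p ≤ c) : MM μ f t ≤ c := by
  refine iSup_le fun p => ?_
  by_cases ht : t ∈ QI p
  · rw [indicator_of_mem ht]; exact h p ht
  · rw [indicator_of_notMem ht]; exact zero_le

lemma exists_of_lt_MM {μ : Measure ℝ} {f : ℝ → ℝ≥0∞} {t : ℝ} {c : ℝ≥0∞} (h : c < MM μ f t) :
    ∃ p, t ∈ QI p ∧ c < avg μ f p := by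
  obtain ⟨p, hp⟩ := lt_iSup_iff.1 h
  by_cases ht : t ∈ QI p
  · rw [indicator_of_mem ht] at hp; exact ⟨p, ht, hp⟩
  · rw [indicator_of_notMem ht] at hp; exact absurd hp (by simp)

lemma avg_mono {μ : Measure ℝ} {f g : ℝ → ℝ≥0∞} (h : ∀ t, f t ≤ g t) (p : ℚ × ℚ) :
    avg μ f p ≤ avg μ g p := by
  unfold avg; gcongr; exact h _

lemma MM_mono {μ : Measure ℝ} {f g : ℝ → ℝ≥0∞} (h : ∀ t, f t ≤ g t) (t : ℝ) :
    MM μ f t ≤ MM μ g t :=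
  MM_le fun p hp => (avg_mono h p).trans (avg_le_MM hp)

lemma measurable_MM (μ : Measure ℝ) (f : ℝ → ℝ≥0∞) : Measurable (MM μ f) :=
  Measurable.iSup fun p => measurable_const.indicator (measurableSet_QI p)

/-- Joint measurability of the maximal function of a family depending on a parameter. -/
lemma measurable_MM_param {α : Type*} [MeasurableSpace α] (μ : Measure ℝ) [SFinite μ]
    {F : α → ℝ → ℝ≥0∞} (hF : Measurable fun z : α × ℝ => F z.1 z.2) :
    Measurable fun z : α × ℝ => MM μ (F z.1) z.2 := by
  refine Measurable.iSup fun p => ?_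
  have h1 : Measurable fun a : α => avg μ (F a) p := by
    unfold avg
    exact (Measurable.lintegral_prod_right' (ν := μ.restrict (QI p)) hF).const_mul _
  have : (fun z : α × ℝ => (QI p).indicator (fun _ => avg μ (F z.1) p) z.2) =
      (Prod.snd ⁻¹' QI p).indicator (fun z : α × ℝ => avg μ (F z.1) p) := by
    ext z; by_cases h : z.2 ∈ QI p <;> simp [indicator, h]
  rw [this]
  exact (h1.comp measurable_fst).indicator (measurable_snd (measurableSet_QI p))

lemma MM_const_mul (μ : Measure ℝ) {f : ℝ → ℝ≥0∞} (hf : Measurable f) (c : ℝ≥0∞) (t : ℝ) :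
    MM μ (fun s => c * f s) t = c * MM μ f t := by
  unfold MM
  rw [ENNReal.mul_iSup]
  congr 1; ext p
  by_cases ht : t ∈ QI p
  · simp only [indicator_of_mem ht, avg, lintegral_const_mul c hf]; ring
  · simp [indicator_of_notMem ht]

lemma MM_tsum_le (μ : Measure ℝ) {f : ℕ → ℝ → ℝ≥0∞} (hf : ∀ k, Measurable (f k)) (t : ℝ) :
    MM μ (fun s => ∑' k, f k s) t ≤ ∑' k, MM μ (f k) t := by
  refine MM_le fun p hp => ?_
  unfold avg
  rw [lintegral_tsum fun k => (hf k).aemeasurable, ← ENNReal.tsum_mul_left]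
  exact ENNReal.tsum_le_tsum fun k => avg_le_MM hp

lemma avg_add_const_le (μ : Measure ℝ) {f : ℝ → ℝ≥0∞} (c : ℝ≥0∞) (p : ℚ × ℚ) :
    avg μ (fun s => f s + c) p ≤ avg μ f p + c := by
  unfold avg
  rw [lintegral_add_right _ measurable_const, mul_add]
  gcongr
  simp only [lintegral_const, Measure.restrict_apply MeasurableSet.univ, univ_inter]
  calc (μ (QI p))⁻¹ * (c * μ (QI p)) = c * ((μ (QI p))⁻¹ * μ (QI p)) := by ring
    _ ≤ c * 1 := by gcongr; exact ENNReal.inv_mul_le_one _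
    _ = c := mul_one c

/-! ### Covering and the maximal theorem for an arbitrary measure on the line -/

/-- From a finite family of intervals one may select a subfamily with the same union in which
no point is covered more than twice: a minimal subfamily works, since among three intervals with a
common point one is contained in the union of the other two. -/
lemma exists_cover (S : Finset (ℚ × ℚ)) :
    ∃ T ⊆ S, (⋃ p ∈ T, QI p) = (⋃ p ∈ S, QI p) ∧
      ∀ x : ℝ, ∑ p ∈ T, (QI p).indicator (fun _ => (1 : ℝ≥0∞)) x ≤ 2 := by
  classical
  induction h : S.card using Nat.strong_induction_on generalizing S with
  | _ n ih =>
  by_cases hred : ∃ p ∈ S, (⋃ q ∈ S.erase p, QI q) = ⋃ q ∈ S, QI q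
  · obtain ⟨p, hp, hU⟩ := hred
    obtain ⟨T, hT, hTU, hT2⟩ := ih _ (by rw [← h]; exact Finset.card_erase_lt_of_mem hp)
      (S.erase p) rfl
    exact ⟨T, hT.trans (Finset.erase_subset _ _), hTU.trans hU, hT2⟩
  · push Not at hred
    refine ⟨S, subset_rfl, rfl, fun x => ?_⟩
    set A := S.filter (fun p => x ∈ QI p) with hA
    have hsum : ∑ p ∈ S, (QI p).indicator (fun _ => (1 : ℝ≥0∞)) x = A.card := by
      rw [hA, Finset.card_filter, Nat.cast_sum]
      exact Finset.sum_congr rfl fun p _ => by by_cases hx : x ∈ QI p <;> simp [hx]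
    rw [hsum]
    rcases A.eq_empty_or_nonempty with h0 | hne
    · simp [h0]
    obtain ⟨l, hl, hlmin⟩ := A.exists_min_image (fun p => p.1) hne
    obtain ⟨r, hr, hrmax⟩ := A.exists_max_image (fun p => p.2) hne
    have hsub : A ⊆ {l, r} := by
      intro p hp
      by_contra hpn
      simp only [Finset.mem_insert, Finset.mem_singleton, not_or] at hpn
      have hpS : p ∈ S := (Finset.mem_filter.1 hp).1
      have hlx := (Finset.mem_filter.1 hl).2
      have hrx := (Finset.mem_filter.1 hr).2
      refine hred p hpS (subset_antisymm
        (biUnion_subset_biUnion_left fun q hq => Finset.mem_of_mem_erase hq) ?_)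
      refine iUnion₂_subset fun q hq y hy => ?_
      by_cases hqp : q = p
      · subst hqp
        simp only [mem_iUnion]
        rcases le_total y x with hyx | hyx
        · refine ⟨l, Finset.mem_erase.2 ⟨Ne.symm hpn.1, (Finset.mem_filter.1 hl).1⟩, ?_, ?_⟩
          · exact lt_of_le_of_lt (by exact_mod_cast hlmin _ hp) hy.1
          · exact lt_of_le_of_lt hyx hlx.2
        · refine ⟨r, Finset.mem_erase.2 ⟨Ne.symm hpn.2, (Finset.mem_filter.1 hr).1⟩, ?_, ?_⟩
          · exact lt_of_lt_of_le hrx.1 hyx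
          · exact lt_of_lt_of_le hy.2 (by exact_mod_cast hrmax _ hp)
      · simp only [mem_iUnion]
        exact ⟨q, Finset.mem_erase.2 ⟨hqp, hq⟩, hy⟩
    calc (A.card : ℝ≥0∞) ≤ (({l, r} : Finset (ℚ × ℚ)).card : ℝ≥0∞) := by
          exact_mod_cast Finset.card_le_card hsub
      _ ≤ 2 := by exact_mod_cast Finset.card_le_two

/-- The weak-type `(1, 1)` inequality, with a constant that does not depend on the measure. -/
lemma weak_type (μ : Measure ℝ) (f : ℝ → ℝ≥0∞) (hf : Measurable f) (c : ℝ≥0∞) :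
    c * μ {t | c < MM μ f t} ≤ 2 * ∫⁻ s, f s ∂μ := by
  classical
  set P : Set (ℚ × ℚ) := {p | c < avg μ f p} with hP
  have hset : {t | c < MM μ f t} = ⋃ S : {S : Finset (ℚ × ℚ) // ↑S ⊆ P}, ⋃ p ∈ S.1, QI p := by
    ext t
    simp only [mem_ofPred_eq, mem_iUnion]
    constructor
    · intro h
      obtain ⟨p, hp, hc⟩ := exists_of_lt_MM h
      exact ⟨⟨{p}, by simpa using! hc⟩, p, by simp, hp⟩
    · rintro ⟨S, p, hp, ht⟩
      exact lt_of_lt_of_le (S.2 hp) (avg_le_MM ht)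
  have hdir : Directed (· ⊆ ·)
      (fun S : {S : Finset (ℚ × ℚ) // ↑S ⊆ P} => ⋃ p ∈ S.1, QI p) := by
    intro S T
    refine ⟨⟨S.1 ∪ T.1, by simpa using! ⟨S.2, T.2⟩⟩, ?_, ?_⟩
    · exact biUnion_subset_biUnion_left fun q hq => Finset.mem_union_left _ hq
    · exact biUnion_subset_biUnion_left fun q hq => Finset.mem_union_right _ hq
  rw [hset, hdir.measure_iUnion, ENNReal.mul_iSup]
  refine iSup_le fun S => ?_
  obtain ⟨T, hTS, hTU, hT2⟩ := exists_cover S.1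
  rw [← hTU]
  have key : ∀ p ∈ T, c * μ (QI p) ≤ ∫⁻ s in QI p, f s ∂μ := by
    intro p hp
    have hc : c < (μ (QI p))⁻¹ * ∫⁻ s in QI p, f s ∂μ := S.2 (hTS hp)
    rcases eq_or_ne (μ (QI p)) 0 with h0 | h0
    · simp [h0]
    rcases eq_or_ne (μ (QI p)) ∞ with h1 | h1
    · simp [h1] at hc
    calc c * μ (QI p) ≤ ((μ (QI p))⁻¹ * ∫⁻ s in QI p, f s ∂μ) * μ (QI p) := by gcongr
      _ = ((μ (QI p))⁻¹ * μ (QI p)) * ∫⁻ s in QI p, f s ∂μ := by ring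
      _ = _ := by rw [ENNReal.inv_mul_cancel h0 h1, one_mul]
  calc c * μ (⋃ p ∈ T, QI p) ≤ c * ∑ p ∈ T, μ (QI p) := by
        gcongr; exact measure_biUnion_finset_le _ _
    _ = ∑ p ∈ T, c * μ (QI p) := Finset.mul_sum _ _ _
    _ ≤ ∑ p ∈ T, ∫⁻ s in QI p, f s ∂μ := Finset.sum_le_sum key
    _ = ∑ p ∈ T, ∫⁻ s, (QI p).indicator (fun _ => (1 : ℝ≥0∞)) s * f s ∂μ := by
        refine Finset.sum_congr rfl fun p _ => ?_
        rw [← lintegral_indicator (measurableSet_QI p)]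
        congr 1; ext s
        by_cases hs : s ∈ QI p <;> simp [hs]
    _ = ∫⁻ s, (∑ p ∈ T, (QI p).indicator (fun _ => (1 : ℝ≥0∞)) s) * f s ∂μ := by
        rw [← lintegral_finsetSum]
        · simp_rw [Finset.sum_mul]
        · exact fun p _ => (measurable_const.indicator (measurableSet_QI p)).mul hf
    _ ≤ ∫⁻ s, 2 * f s ∂μ := by gcongr with s; exact hT2 s
    _ = 2 * ∫⁻ s, f s ∂μ := lintegral_const_mul _ hf

lemma lintegral_rpow_Ioo {s c : ℝ} (hs : -1 < s) (hc : 0 ≤ c) :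
    ∫⁻ l in Ioo 0 c, ENNReal.ofReal (l ^ s) = ENNReal.ofReal (c ^ (s + 1) / (s + 1)) := by
  have hint : IntegrableOn (fun l : ℝ => l ^ s) (Ioc 0 c) :=
    (intervalIntegrable_iff_integrableOn_Ioc_of_le hc).1
      (intervalIntegral.intervalIntegrable_rpow' hs)
  rw [setLIntegral_congr Ioo_ae_eq_Ioc, ← ofReal_integral_eq_lintegral_ofReal hint,
    ← intervalIntegral.integral_of_le hc, integral_rpow (Or.inl hs),
    Real.zero_rpow (by linarith), sub_zero]
  exact (ae_restrict_iff' measurableSet_Ioc).2 (ae_of_all _ fun x hx =>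
    Real.rpow_nonneg hx.1.le _)

/-- The layer-cake formula for a power of a single extended nonnegative number. -/
lemma layer {q : ℝ} (hq : 0 < q) (x : ℝ≥0∞) :
    ∫⁻ l in Ioi (0 : ℝ), ENNReal.ofReal (l ^ (q - 1)) *
      {l : ℝ | ENNReal.ofReal l < x}.indicator (fun _ => 1) l =
      ENNReal.ofReal (1 / q) * x ^ q := by
  have hfin : ∀ y : ℝ, 0 ≤ y →
      ∫⁻ l in Ioi (0 : ℝ), ENNReal.ofReal (l ^ (q - 1)) *
      {l : ℝ | ENNReal.ofReal l < ENNReal.ofReal y}.indicator (fun _ => 1) l =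
      ENNReal.ofReal (1 / q) * ENNReal.ofReal y ^ q := by
    intro y hy
    have h1 : ∀ l ∈ Ioi (0 : ℝ), ENNReal.ofReal (l ^ (q - 1)) *
        {l : ℝ | ENNReal.ofReal l < ENNReal.ofReal y}.indicator (fun _ => 1) l =
        (Ioo 0 y).indicator (fun l => ENNReal.ofReal (l ^ (q - 1))) l := by
      intro l hl
      have hl : 0 < l := hl
      by_cases hly : l < y
      · have : ENNReal.ofReal l < ENNReal.ofReal y := (ENNReal.ofReal_lt_ofReal_iff' ).2
          ⟨hly, hl.trans hly⟩
        simp [this, hl, hly]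
      · have : ¬ ENNReal.ofReal l < ENNReal.ofReal y := not_lt.2
          (ENNReal.ofReal_le_ofReal (not_lt.1 hly))
        rw [indicator_of_notMem (by simpa using not_lt.1 this),
          indicator_of_notMem (fun h => hly h.2), mul_zero]
    rw [setLIntegral_congr_fun measurableSet_Ioi h1, lintegral_indicator measurableSet_Ioo,
      Measure.restrict_restrict measurableSet_Ioo,
      inter_eq_self_of_subset_left (fun l hl => hl.1), lintegral_rpow_Ioo (by linarith) hy,
      sub_add_cancel, ENNReal.ofReal_rpow_of_nonneg hy hq.le, ← ENNReal.ofReal_mul (by positivity)]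
    congr 1; ring
  rcases eq_or_ne x ∞ with rfl | hx
  · rw [ENNReal.top_rpow_of_pos hq, ENNReal.mul_top (by simpa using hq)]
    refine ENNReal.eq_top_of_forall_nnreal_le fun r => ?_
    have h2 := hfin ((q * r) ^ (1 / q)) (by positivity)
    rw [ENNReal.ofReal_rpow_of_nonneg (by positivity) hq.le, ← Real.rpow_mul (by positivity),
      one_div_mul_cancel hq.ne', Real.rpow_one, ← ENNReal.ofReal_mul (by positivity),
      ← mul_assoc, one_div_mul_cancel hq.ne', one_mul, ENNReal.ofReal_coe_nnreal] at h2
    rw [← h2]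
    gcongr
    exact le_top
  · have := hfin x.toReal ENNReal.toReal_nonneg
    rwa [ENNReal.ofReal_toReal hx] at this

/-- The maximal theorem: for every s-finite measure on the line, the uncentred maximal operator
is bounded on `L^p(μ)`, with a bound depending on `p` only. -/
lemma strong_type {p : ℝ} (hp : 1 < p) : ∃ C : ℝ≥0, ∀ (μ : Measure ℝ) [SFinite μ]
    (f : ℝ → ℝ≥0∞), Measurable f → ∫⁻ t, MM μ f t ^ p ∂μ ≤ C * ∫⁻ t, f t ^ p ∂μ := by
  refine ⟨Real.toNNReal (p * 4 * (1 / (p - 1)) * 2 ^ (p - 1)), fun μ _ f hf => ?_⟩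
  have hp0 : 0 < p := by linarith
  -- the weak-type bound with the part of `f` below `l / 2` removed
  have weak : ∀ l : ℝ, 0 < l → ENNReal.ofReal l * μ {t | ENNReal.ofReal l < MM μ f t} ≤
      4 * ∫⁻ s, f s * {l : ℝ | ENNReal.ofReal l < 2 * f s}.indicator (fun _ => 1) l ∂μ := by
    intro l hl
    set h : ℝ → ℝ≥0∞ :=
      fun s => f s * {l : ℝ | ENNReal.ofReal l < 2 * f s}.indicator (fun _ => 1) l with hh
    have hmeas : Measurable h := by
      have : h = {s | ENNReal.ofReal l < 2 * f s}.indicator f := by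
        ext s; by_cases hs : ENNReal.ofReal l < 2 * f s <;> simp [hh, hs]
      rw [this]
      exact hf.indicator (measurableSet_lt measurable_const (hf.const_mul 2))
    have hle : ∀ s, f s ≤ h s + ENNReal.ofReal (l / 2) := by
      intro s
      by_cases hs : ENNReal.ofReal l < 2 * f s
      · simp [hh, hs]
      · rw [not_lt] at hs
        have : 2 * f s ≤ 2 * ENNReal.ofReal (l / 2) := by
          rw [← ENNReal.ofReal_ofNat 2, ← ENNReal.ofReal_mul (by norm_num)]
          rw [ENNReal.ofReal_ofNat]
          exact hs.trans (le_of_eq (by congr 1; ring))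
        exact ((ENNReal.mul_le_mul_iff_right (by norm_num) (by norm_num)).1 this).trans le_add_self
    have hsub : {t | ENNReal.ofReal l < MM μ f t} ⊆ {t | ENNReal.ofReal (l / 2) < MM μ h t} := by
      intro t ht
      obtain ⟨P, hP, hPl⟩ := exists_of_lt_MM ht
      have h1 := hPl.trans_le ((avg_mono hle P).trans (avg_add_const_le μ _ P))
      have h2 : ENNReal.ofReal l = ENNReal.ofReal (l / 2) + ENNReal.ofReal (l / 2) := by
        rw [← ENNReal.ofReal_add (by positivity) (by positivity)]; congr 1; ring
      rw [h2] at h1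
      exact (lt_of_add_lt_add_right h1).trans_le (avg_le_MM hP)
    have h3 := weak_type μ h hmeas (ENNReal.ofReal (l / 2))
    have h2 : ENNReal.ofReal l = 2 * ENNReal.ofReal (l / 2) := by
      rw [← ENNReal.ofReal_ofNat 2, ← ENNReal.ofReal_mul (by norm_num)]; congr 1; ring
    calc ENNReal.ofReal l * μ {t | ENNReal.ofReal l < MM μ f t}
        ≤ 2 * ENNReal.ofReal (l / 2) * μ {t | ENNReal.ofReal (l / 2) < MM μ h t} := by
          rw [h2]; exact mul_le_mul_right (measure_mono (h2 ▸ hsub)) _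
      _ ≤ 2 * (2 * ∫⁻ s, h s ∂μ) := by rw [mul_assoc]; gcongr
      _ = 4 * ∫⁻ s, h s ∂μ := by rw [← mul_assoc]; norm_num
  have hind : ∀ g : ℝ → ℝ≥0∞, Measurable g → Measurable fun z : ℝ × ℝ =>
      {l : ℝ | ENNReal.ofReal l < g z.1}.indicator (fun _ => (1 : ℝ≥0∞)) z.2 := by
    intro g hg
    have : (fun z : ℝ × ℝ => {l : ℝ | ENNReal.ofReal l < g z.1}.indicator
        (fun _ => (1 : ℝ≥0∞)) z.2) =
        {z : ℝ × ℝ | ENNReal.ofReal z.2 < g z.1}.indicator (fun _ => 1) := by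
      ext z; simp only [indicator, mem_ofPred_eq]
    rw [this]
    exact measurable_const.indicator (measurableSet_lt
      (ENNReal.measurable_ofReal.comp measurable_snd) (hg.comp measurable_fst))
  have hpow : Measurable fun z : ℝ × ℝ => ENNReal.ofReal (z.2 ^ (p - 1)) :=
    ENNReal.measurable_ofReal.comp (measurable_snd.pow_const _)
  have hpow2 : Measurable fun z : ℝ × ℝ => ENNReal.ofReal (z.2 ^ (p - 1 - 1)) :=
    ENNReal.measurable_ofReal.comp (measurable_snd.pow_const _)
  have hM := measurable_MM μ f
  have step1 : ENNReal.ofReal (1 / p) * ∫⁻ t, MM μ f t ^ p ∂μ =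
      ∫⁻ l in Ioi (0 : ℝ), ENNReal.ofReal (l ^ (p - 1)) * μ {t | ENNReal.ofReal l < MM μ f t} := by
    rw [← lintegral_const_mul _ (hM.pow_const p)]
    simp_rw [← layer hp0]
    rw [lintegral_lintegral_swap (hpow.mul (hind _ hM)).aemeasurable]
    congr 1; ext l
    have hm : Measurable fun t => {l : ℝ | ENNReal.ofReal l < MM μ f t}.indicator
        (fun _ => (1 : ℝ≥0∞)) l := (hind _ hM).comp (measurable_id.prodMk measurable_const)
    rw [lintegral_const_mul _ hm]
    congr 1
    rw [← lintegral_indicator_one (measurableSet_lt measurable_const hM)]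
    congr 1
  have step2 : ∫⁻ l in Ioi (0 : ℝ), ENNReal.ofReal (l ^ (p - 1)) *
      μ {t | ENNReal.ofReal l < MM μ f t} ≤
      ∫⁻ l in Ioi (0 : ℝ), ENNReal.ofReal (l ^ (p - 1 - 1)) * (4 * ∫⁻ s, f s *
        {l : ℝ | ENNReal.ofReal l < 2 * f s}.indicator (fun _ => 1) l ∂μ) := by
    refine setLIntegral_mono_ae' measurableSet_Ioi (ae_of_all _ fun l hl => ?_)
    have hl : 0 < l := hl
    have : ENNReal.ofReal (l ^ (p - 1)) = ENNReal.ofReal (l ^ (p - 1 - 1)) * ENNReal.ofReal l := by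
      rw [← ENNReal.ofReal_mul (by positivity)]
      congr 1
      rw [Real.rpow_sub_one hl.ne' (p - 1)]; field_simp
    rw [this, mul_assoc]
    exact mul_le_mul_right (weak l hl) _
  have step3 : ∫⁻ l in Ioi (0 : ℝ), ENNReal.ofReal (l ^ (p - 1 - 1)) * (4 * ∫⁻ s, f s *
        {l : ℝ | ENNReal.ofReal l < 2 * f s}.indicator (fun _ => 1) l ∂μ) =
      4 * (ENNReal.ofReal (1 / (p - 1)) * 2 ^ (p - 1)) * ∫⁻ s, f s ^ p ∂μ := by
    have h2f : Measurable fun s => 2 * f s := hf.const_mul 2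
    have e1 : ∀ l : ℝ, ENNReal.ofReal (l ^ (p - 1 - 1)) * (4 * ∫⁻ s, f s *
        {l : ℝ | ENNReal.ofReal l < 2 * f s}.indicator (fun _ => 1) l ∂μ) =
        ∫⁻ s, 4 * f s * (ENNReal.ofReal (l ^ (p - 1 - 1)) *
          {l : ℝ | ENNReal.ofReal l < 2 * f s}.indicator (fun _ => 1) l) ∂μ := by
      intro l
      have hm : Measurable fun s => f s *
          {l : ℝ | ENNReal.ofReal l < 2 * f s}.indicator (fun _ => (1 : ℝ≥0∞)) l :=
        hf.mul ((hind _ h2f).comp (measurable_id.prodMk measurable_const))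
      rw [← lintegral_const_mul _ hm, ← lintegral_const_mul _ (hm.const_mul _)]
      congr 1; ext s; ring
    simp_rw [e1]
    rw [lintegral_lintegral_swap
      (((hf.comp measurable_snd).const_mul 4).mul ((hpow2.mul (hind _ h2f)).comp
        measurable_swap)).aemeasurable, ← lintegral_const_mul _ (hf.pow_const p)]
    congr 1; ext s
    rw [lintegral_const_mul, layer (by linarith), ENNReal.mul_rpow_of_nonneg _ _ (by linarith)]
    · have : f s ^ p = f s * f s ^ (p - 1) := by
        nth_rewrite 2 [← ENNReal.rpow_one (f s)]
        rw [← ENNReal.rpow_add_of_nonneg _ _ (by norm_num) (by linarith)]; congr 1; ring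
      rw [this]; ring
    · exact (hpow2.mul (hind _ h2f)).comp (measurable_const.prodMk measurable_id)
  have h4 := step1.trans_le (step2.trans_eq step3)
  have h5 : ENNReal.ofReal p * ENNReal.ofReal (1 / p) = 1 := by
    rw [← ENNReal.ofReal_mul hp0.le, mul_one_div_cancel hp0.ne', ENNReal.ofReal_one]
  calc ∫⁻ t, MM μ f t ^ p ∂μ
      = ENNReal.ofReal p * (ENNReal.ofReal (1 / p) * ∫⁻ t, MM μ f t ^ p ∂μ) := by
        rw [← mul_assoc, h5, one_mul]
    _ ≤ ENNReal.ofReal p *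
        (4 * (ENNReal.ofReal (1 / (p - 1)) * 2 ^ (p - 1)) * ∫⁻ s, f s ^ p ∂μ) := by gcongr
    _ = _ := by
        have hp1 : 0 ≤ 1 / (p - 1) := by apply one_div_nonneg.2; linarith
        change _ = ENNReal.ofReal _ * _
        rw [ENNReal.ofReal_mul (by positivity), ENNReal.ofReal_mul (by positivity),
          ENNReal.ofReal_mul (by positivity), ← ENNReal.ofReal_rpow_of_pos (by norm_num),
          ENNReal.ofReal_ofNat, ENNReal.ofReal_ofNat]
        ring

/-! ### Exponential coordinates on positive finite extended reals -/

/-- The parametrization of `(0, ∞)` inside `ℝ≥0∞` by the exponential; it turns identities between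
powers into linear identities between exponents. -/
def E (y : ℝ) : ℝ≥0∞ := ENNReal.ofReal (Real.exp y)

lemma E_ne_zero (y : ℝ) : E y ≠ 0 := by simp [E, Real.exp_pos]
lemma E_ne_top (y : ℝ) : E y ≠ ∞ := by simp [E]
lemma E_mul (x y : ℝ) : E x * E y = E (x + y) := by
  rw [E, E, E, ← ENNReal.ofReal_mul (Real.exp_pos _).le, Real.exp_add]
lemma E_rpow (x r : ℝ) : E x ^ r = E (x * r) := by
  rw [E, E, ENNReal.ofReal_rpow_of_pos (Real.exp_pos _), ← Real.exp_mul]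
lemma E_inv (x : ℝ) : (E x)⁻¹ = E (-x) := by
  rw [← ENNReal.rpow_neg_one, E_rpow]; congr 1; ring
lemma E_zero : E 0 = 1 := by simp [E]
lemma exists_E {x : ℝ≥0∞} (h0 : x ≠ 0) (h1 : x ≠ ∞) : ∃ y, x = E y := by
  refine ⟨Real.log x.toReal, ?_⟩
  rw [E, Real.exp_log (ENNReal.toReal_pos h0 h1), ENNReal.ofReal_toReal h1]

lemma rpow_neg_le {x y : ℝ≥0∞} {K : ℝ≥0} {r : ℝ} (hr : 0 ≤ r) (hK : K ≠ 0) (h : x ≤ K * y) :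
    y ^ (-r) ≤ (K : ℝ≥0∞) ^ r * x ^ (-r) := by
  obtain ⟨k, hk⟩ := exists_E (x := (K : ℝ≥0∞)) (by simpa using hK) ENNReal.coe_ne_top
  rw [hk] at h ⊢
  have h1 : x ^ r ≤ E k ^ r * y ^ r := by
    rw [← ENNReal.mul_rpow_of_nonneg _ _ hr]; gcongr
  rw [ENNReal.rpow_neg, ENNReal.rpow_neg]
  have h2 := ENNReal.inv_le_inv.2 h1
  rw [E_rpow] at h2 ⊢
  rw [ENNReal.mul_inv (Or.inl (E_ne_zero _)) (Or.inl (E_ne_top _))] at h2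
  calc (y ^ r)⁻¹ = E (k * r) * ((E (k * r))⁻¹ * (y ^ r)⁻¹) := by
        rw [← mul_assoc, ENNReal.mul_inv_cancel (E_ne_zero _) (E_ne_top _), one_mul]
    _ ≤ _ := by gcongr

/-! ### Weights -/

/-- Muckenhoupt `A₁` weights with constant `K`: the maximal function of `a` is at most `K * a`
everywhere. Positivity is required everywhere, finiteness almost everywhere. -/
structure A1 (K : ℝ≥0) (a : ℝ → ℝ≥0∞) : Prop where
  meas : Measurable a
  pos : ∀ t, a t ≠ 0
  fin : ∀ᵐ t, a t ≠ ∞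
  le : ∀ t, MM volume a t ≤ K * a t

lemma A1.mono {K L : ℝ≥0} {a : ℝ → ℝ≥0∞} (h : A1 K a) (hKL : K ≤ L) : A1 L a :=
  ⟨h.meas, h.pos, h.fin, fun t => (h.le t).trans (by gcongr)⟩

lemma volume_QI_ne_top (p : ℚ × ℚ) : volume (QI p) ≠ ∞ := by simp [QI]
lemma volume_QI_ne_zero {p : ℚ × ℚ} {t : ℝ} (h : t ∈ QI p) : volume (QI p) ≠ 0 := by
  have h1 := h.1; have h2 := h.2
  simp only [QI, Real.volume_Ioo, ne_eq, ENNReal.ofReal_eq_zero, not_le]; linarith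

lemma A1_one : A1 1 (fun _ => 1) := by
  refine ⟨measurable_const, by simp, by simp, fun t => MM_le fun p hp => ?_⟩
  simp only [avg, lintegral_const, Measure.restrict_apply MeasurableSet.univ, univ_inter]
  simp [ENNReal.inv_mul_le_one]

lemma ae_ne_of {a : ℝ → ℝ≥0∞} {K : ℝ≥0} (h : A1 K a) : ∀ᵐ t, ∃ x, a t = E x := by
  filter_upwards [h.fin] with t ht using exists_E (h.pos t) ht

lemma A1.avg_le {K : ℝ≥0} {a : ℝ → ℝ≥0∞} (h : A1 K a) {p : ℚ × ℚ} {t : ℝ} (ht : t ∈ QI p) :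
    avg volume a p ≤ K * a t := (avg_le_MM ht).trans (h.le t)

lemma A1.avg_E {K : ℝ≥0} {a : ℝ → ℝ≥0∞} (h : A1 K a) {p : ℚ × ℚ} {t : ℝ} (ht : t ∈ QI p) :
    ∃ x, avg volume a p = E x := by
  apply exists_E
  · simp only [avg, ne_eq, mul_eq_zero, ENNReal.inv_eq_zero, volume_QI_ne_top, false_or]
    rw [lintegral_eq_zero_iff h.meas]
    intro h0
    have h1 : ∀ᵐ s ∂(volume.restrict (QI p)), False := by
      filter_upwards [h0] with s hs using h.pos s hs
    rw [eventually_false_iff_eq_bot, ae_eq_bot, Measure.restrict_eq_zero] at h1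
    exact volume_QI_ne_zero ht h1
  · intro htop
    have h1 : ∀ᵐ s ∂(volume.restrict (QI p)), False := by
      filter_upwards [ae_restrict_of_ae h.fin, ae_restrict_mem (measurableSet_QI p)] with s hs hsQ
      have h2 := h.avg_le hsQ
      rw [htop, top_le_iff] at h2
      exact ENNReal.mul_ne_top ENNReal.coe_ne_top hs h2
    rw [eventually_false_iff_eq_bot, ae_eq_bot, Measure.restrict_eq_zero] at h1
    exact volume_QI_ne_zero ht h1

lemma A1.K_ne_zero {K : ℝ≥0} {a : ℝ → ℝ≥0∞} (h : A1 K a) : K ≠ 0 := by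
  rintro rfl
  have ht : (1 / 2 : ℝ) ∈ QI (0, 1) := by constructor <;> norm_num
  obtain ⟨x, hx⟩ := h.avg_E ht
  have h1 := h.avg_le ht
  rw [hx] at h1
  exact E_ne_zero x (by simpa using h1)

lemma lintegral_QI {f : ℝ → ℝ≥0∞} {p : ℚ × ℚ} {t : ℝ} (ht : t ∈ QI p) :
    ∫⁻ s in QI p, f s = avg volume f p * volume (QI p) := by
  unfold avg
  rw [mul_right_comm, ENNReal.inv_mul_cancel (volume_QI_ne_zero ht) (volume_QI_ne_top p), one_mul]

/-- A product of powers `a * b ^ (-r)` of `A₁` weights has the upper bound on intervals that one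
would get from replacing `b` by its average. -/
lemma A1.lintegral_mul_le {K : ℝ≥0} {a b : ℝ → ℝ≥0∞} (ha : A1 K a) (hb : A1 K b) {r : ℝ}
    (hr : 0 ≤ r) {p : ℚ × ℚ} {t : ℝ} (ht : t ∈ QI p) :
    ∫⁻ s in QI p, a s * b s ^ (-r) ≤
      avg volume a p * volume (QI p) * ((K : ℝ≥0∞) ^ r * avg volume b p ^ (-r)) := by
  rw [← lintegral_QI ht, ← lintegral_mul_const _ ha.meas]
  refine setLIntegral_mono' (measurableSet_QI p) fun s hs => ?_
  gcongr
  exact rpow_neg_le hr hb.K_ne_zero (hb.avg_le hs)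

/-- The maximal operator is bounded on `L^p` with weight `a * b ^ (1 - p)` when `a, b` are `A₁`.
With `w` this weight and `σ` its dual weight, the `A_p` condition gives the pointwise bound
`(M f) ^ (p - 1) ≤ K ^ p * M_w ((M_σ (f / σ)) ^ (p - 1) / w)`, so that the maximal theorems
for the measures `w dt` and `σ dt` apply. -/
lemma weighted {p : ℝ} (hp : 1 < p) (K : ℝ≥0) : ∃ C : ℝ≥0, ∀ a b : ℝ → ℝ≥0∞, A1 K a → A1 K b →
    ∀ f : ℝ → ℝ≥0∞, Measurable f →
      ∫⁻ t, MM volume f t ^ p * (a t * b t ^ (1 - p)) ≤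
        C * ∫⁻ t, f t ^ p * (a t * b t ^ (1 - p)) := by
  have hp1 : 0 < p - 1 := by linarith
  have hp0 : 0 < p := by linarith
  set q := p / (p - 1) with hq
  have hq1 : 1 < q := by rw [hq, lt_div_iff₀ hp1]; linarith
  set e := 1 / (p - 1) with he
  have he0 : 0 ≤ e := by positivity
  obtain ⟨C1, hC1⟩ := strong_type hp
  obtain ⟨C2, hC2⟩ := strong_type hq1
  refine ⟨(K ^ p) ^ q * C2 * C1, fun a b ha hb f hf => ?_⟩
  set w : ℝ → ℝ≥0∞ := fun t => a t * b t ^ (1 - p) with hw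
  set σ : ℝ → ℝ≥0∞ := fun t => b t * a t ^ (-e) with hσ
  have hwm : Measurable w := ha.meas.mul (hb.meas.pow_const _)
  have hσm : Measurable σ := hb.meas.mul (ha.meas.pow_const _)
  set φ : ℝ → ℝ≥0∞ := fun t => f t * (σ t)⁻¹ with hφ
  have hφm : Measurable φ := hf.mul hσm.inv
  set k : ℝ → ℝ≥0∞ := fun t => MM (volume.withDensity σ) φ t ^ (p - 1) * (w t)⁻¹ with hk
  have hkm : Measurable k := ((measurable_MM _ _).pow_const _).mul hwm.inv
  have hae : ∀ᵐ t, ∃ x y, a t = E x ∧ b t = E y := by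
    filter_upwards [ae_ne_of ha, ae_ne_of hb] with t ⟨x, hx⟩ ⟨y, hy⟩ using ⟨x, y, hx, hy⟩
  have hK0 := ha.K_ne_zero
  obtain ⟨κ, hκ⟩ := exists_E (x := (K : ℝ≥0∞)) (by simpa using hK0) ENNReal.coe_ne_top
  have key : ∀ t, MM volume f t ^ (p - 1) ≤
      (K : ℝ≥0∞) ^ p * MM (volume.withDensity w) k t := by
    intro t
    rw [← ENNReal.le_rpow_inv_iff hp1]
    refine MM_le fun Q ht => ?_
    rw [ENNReal.le_rpow_inv_iff hp1]
    refine le_trans ?_ (mul_le_mul_right (avg_le_MM ht) _)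
    obtain ⟨x, hx⟩ := ha.avg_E ht
    obtain ⟨y, hy⟩ := hb.avg_E ht
    obtain ⟨v, hv⟩ := exists_E (volume_QI_ne_zero ht) (volume_QI_ne_top Q)
    have hwQ : volume.withDensity w (QI Q) ≤ E (x + v + (κ * (p - 1) - y * (p - 1))) := by
      rw [withDensity_apply _ (measurableSet_QI Q)]
      have := ha.lintegral_mul_le hb hp1.le ht
      rw [hx, hy, hv, hκ, E_rpow, E_rpow, E_mul, E_mul, E_mul] at this
      have e1 : (1 - p) = -(p - 1) := by ring
      simp only [hw, e1]
      convert this using 2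
      ring
    have hσQ : volume.withDensity σ (QI Q) ≤ E (y + v + (κ * e - x * e)) := by
      rw [withDensity_apply _ (measurableSet_QI Q)]
      have := hb.lintegral_mul_le ha he0 ht
      rw [hx, hy, hv, hκ, E_rpow, E_rpow, E_mul, E_mul, E_mul] at this
      simp only [hσ]
      convert this using 2
      ring
    set c := avg (volume.withDensity σ) φ Q with hc
    have h1 : ∫⁻ s in QI Q, f s ≤ volume.withDensity σ (QI Q) * c := by
      have h2 : ∫⁻ s in QI Q, f s = ∫⁻ s in QI Q, φ s ∂(volume.withDensity σ) := by
        rw [restrict_withDensity (measurableSet_QI Q),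
          lintegral_withDensity_eq_lintegral_mul _ hσm hφm]
        refine lintegral_congr_ae (ae_restrict_of_ae ?_)
        filter_upwards [hae] with s ⟨x', y', hx', hy'⟩
        simp only [hφ, hσ, Pi.mul_apply, hx', hy', E_rpow, E_mul]
        rw [mul_left_comm, ENNReal.mul_inv_cancel (E_ne_zero _) (E_ne_top _), mul_one]
      rw [h2, hc, avg, ← mul_assoc]
      rcases eq_or_ne (volume.withDensity σ (QI Q)) 0 with h0 | h0
      · rw [setLIntegral_measure_zero _ _ h0]; exact zero_le
      · rw [ENNReal.mul_inv_cancel h0 (ne_top_of_le_ne_top (E_ne_top _) hσQ), one_mul]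
    have h3 : avg volume f Q ≤ E (-v + (y + v + (κ * e - x * e))) * c := by
      rw [avg, hv, E_inv, ← E_mul, mul_assoc]
      gcongr
      exact h1.trans (by gcongr)
    have h4 : E v * c ^ (p - 1) ≤ ∫⁻ s in QI Q, k s ∂(volume.withDensity w) := by
      rw [restrict_withDensity (measurableSet_QI Q),
          lintegral_withDensity_eq_lintegral_mul _ hwm hkm, ← hv, mul_comm, ← setLIntegral_const]
      refine lintegral_mono_ae ?_
      filter_upwards [ae_restrict_of_ae hae, ae_restrict_mem (measurableSet_QI Q)] with
        s ⟨x', y', hx', hy'⟩ hs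
      simp only [hk, hw, Pi.mul_apply, hx', hy', E_rpow, E_mul]
      rw [mul_left_comm, ENNReal.mul_inv_cancel (E_ne_zero _) (E_ne_top _), mul_one]
      gcongr
      exact avg_le_MM hs
    calc avg volume f Q ^ (p - 1) ≤ (E (-v + (y + v + (κ * e - x * e))) * c) ^ (p - 1) := by gcongr
      _ = E (y * (p - 1) + κ - x) * c ^ (p - 1) := by
          rw [ENNReal.mul_rpow_of_nonneg _ _ hp1.le, E_rpow]
          congr 2; rw [he]; field_simp; ring
      _ = E (κ * p) * (E (-(x + v + (κ * (p - 1) - y * (p - 1)))) * (E v * c ^ (p - 1))) := by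
          rw [← mul_assoc, ← mul_assoc, E_mul, E_mul]
          congr 2; ring
      _ ≤ (K : ℝ≥0∞) ^ p * avg (volume.withDensity w) k Q := by
          rw [hκ, E_rpow, avg, ← E_inv]
          gcongr
  calc ∫⁻ t, MM volume f t ^ p * w t = ∫⁻ t, MM volume f t ^ p ∂(volume.withDensity w) := by
        rw [lintegral_withDensity_eq_lintegral_mul _ hwm ((measurable_MM _ _).pow_const _)]
        simp only [Pi.mul_apply, mul_comm]
    _ ≤ ∫⁻ t, ((K : ℝ≥0∞) ^ p) ^ q * MM (volume.withDensity w) k t ^ q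
          ∂(volume.withDensity w) := by
        refine lintegral_mono fun t => ?_
        rw [← ENNReal.mul_rpow_of_nonneg _ _ (by linarith)]
        calc MM volume f t ^ p = (MM volume f t ^ (p - 1)) ^ q := by
              rw [← ENNReal.rpow_mul]; congr 1; rw [hq]; field_simp
          _ ≤ _ := by
              refine ENNReal.rpow_le_rpow (key t) (by linarith)
    _ = ((K : ℝ≥0∞) ^ p) ^ q * ∫⁻ t, MM (volume.withDensity w) k t ^ q
          ∂(volume.withDensity w) := lintegral_const_mul _ ((measurable_MM _ _).pow_const _)
    _ ≤ ((K : ℝ≥0∞) ^ p) ^ q * (C2 * ∫⁻ t, k t ^ q ∂(volume.withDensity w)) := by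
        gcongr; exact hC2 _ _ hkm
    _ = ((K : ℝ≥0∞) ^ p) ^ q * (C2 * ∫⁻ t, MM (volume.withDensity σ) φ t ^ p
          ∂(volume.withDensity σ)) := by
        congr 2
        rw [lintegral_withDensity_eq_lintegral_mul _ hwm (hkm.pow_const _),
          lintegral_withDensity_eq_lintegral_mul _ hσm ((measurable_MM _ _).pow_const _)]
        refine lintegral_congr_ae ?_
        filter_upwards [hae] with s ⟨x', y', hx', hy'⟩
        simp only [hk, hw, hσ, Pi.mul_apply, hx', hy', E_rpow, E_mul, E_inv]
        rw [ENNReal.mul_rpow_of_nonneg _ _ (by linarith), E_rpow, ← ENNReal.rpow_mul,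
          mul_left_comm, E_mul, mul_comm]
        congr 2
        · rw [hq, he]; field_simp; ring
        · rw [hq]; field_simp
    _ ≤ ((K : ℝ≥0∞) ^ p) ^ q * (C2 * (C1 * ∫⁻ t, φ t ^ p ∂(volume.withDensity σ))) := by
        gcongr; exact hC1 _ _ hφm
    _ = ((K : ℝ≥0∞) ^ p) ^ q * (C2 * (C1 * ∫⁻ t, f t ^ p * w t)) := by
        congr 3
        rw [lintegral_withDensity_eq_lintegral_mul _ hσm (hφm.pow_const _)]
        refine lintegral_congr_ae ?_
        filter_upwards [hae] with s ⟨x', y', hx', hy'⟩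
        simp only [hφ, hw, hσ, Pi.mul_apply, hx', hy', E_rpow, E_mul, E_inv]
        rw [ENNReal.mul_rpow_of_nonneg _ _ (by linarith), E_rpow, mul_left_comm, E_mul]
        congr 2
        rw [he]; field_simp; ring
    _ = _ := by
        rw [ENNReal.coe_mul, ENNReal.coe_mul, ENNReal.coe_rpow_of_nonneg _ (by linarith),
          ENNReal.coe_rpow_of_nonneg _ (by linarith)]
        ring

lemma ae_zero_of_MM_eq_zero {h : ℝ → ℝ≥0∞} (hm : Measurable h) {t : ℝ}
    (h0 : MM volume h t = 0) : h =ᵐ[volume] 0 := by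
  have h1 : ∀ n : ℕ, ∀ᵐ s ∂(volume.restrict (QI (-(n : ℚ), (n : ℚ)))), h s = 0 := by
    intro n
    obtain ⟨m, hm1⟩ := exists_nat_gt |t|
    set N := max n m with hN
    have hNm : (m : ℝ) ≤ N := by exact_mod_cast le_max_right n m
    have hNn : (n : ℝ) ≤ N := by exact_mod_cast le_max_left n m
    have htQ : t ∈ QI (-(N : ℚ), (N : ℚ)) := by
      have := abs_lt.1 (hm1.trans_le hNm)
      constructor
      · simpa using this.1
      · simpa using this.2
    have h2 : ∫⁻ s in QI (-(N : ℚ), (N : ℚ)), h s = 0 := by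
      have h3 := (avg_le_MM (μ := volume) (f := h) htQ).trans_eq h0
      rw [lintegral_QI htQ, le_antisymm h3 zero_le, zero_mul]
    have h4 := (lintegral_eq_zero_iff hm).1 h2
    refine ae_restrict_of_ae_restrict_of_subset ?_ h4
    unfold QI
    apply Ioo_subset_Ioo <;> simpa using hNn
  have h2 := (ae_restrict_iUnion_iff (μ := volume) (fun n : ℕ => QI (-(n : ℚ), (n : ℚ)))
    (fun s => h s = 0)).2 h1
  have h3 : (⋃ n : ℕ, QI (-(n : ℚ), (n : ℚ))) = univ := by
    refine eq_univ_of_forall fun s => mem_iUnion.2 ?_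
    obtain ⟨m, hm1⟩ := exists_nat_gt |s|
    have := abs_lt.1 hm1
    exact ⟨m, by simpa using this.1, by simpa using this.2⟩
  rw [h3, Measure.restrict_univ] at h2
  exact h2

/-- The terms of the Rubio de Francia iteration. -/
def iter (N : ℝ≥0∞) (h : ℝ → ℝ≥0∞) : ℕ → ℝ → ℝ≥0∞
  | 0 => h
  | k + 1 => fun t => (2 * N)⁻¹ * MM volume (iter N h k) t

/-- The Rubio de Francia algorithm: if the maximal operator is bounded on `L^p(ν)`, every `h` has a
majorant of comparable norm which satisfies the `A₁` inequality. -/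
lemma rubio {p : ℝ} (hp : 1 < p) (C : ℝ≥0) (ν : Measure ℝ)
    (hM : ∀ f : ℝ → ℝ≥0∞, Measurable f → ∫⁻ t, MM volume f t ^ p ∂ν ≤ C * ∫⁻ t, f t ^ p ∂ν)
    {h : ℝ → ℝ≥0∞} (hm : Measurable h) : ∃ H : ℝ → ℝ≥0∞, Measurable H ∧ (∀ t, h t ≤ H t) ∧
      (∀ t, MM volume H t ≤ (4 * max 1 C : ℝ≥0) * H t) ∧
      ∫⁻ t, H t ^ p ∂ν ≤ (2 : ℝ≥0∞) ^ (p + 1) * ∫⁻ t, h t ^ p ∂ν ∧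
      (¬ h =ᵐ[volume] 0 → ∀ t, H t ≠ 0) := by
  set N : ℝ≥0 := max 1 C with hN
  have hN1 : 1 ≤ N := le_max_left _ _
  have hp0 : 0 < p := by linarith
  have h2N : (2 * (N : ℝ≥0∞)) ≠ 0 := by
    have : N ≠ 0 := (zero_lt_one.trans_le hN1).ne'
    simp [this]
  have h2N' : (2 * (N : ℝ≥0∞)) ≠ ∞ := ENNReal.mul_ne_top (by simp) ENNReal.coe_ne_top
  set x := iter N h with hx
  have hxm : ∀ k, Measurable (x k) := by
    intro k
    cases k with
    | zero => exact hm
    | succ k => exact (measurable_MM _ _).const_mul _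
  have hx1 : ∀ k t, MM volume (x k) t = 2 * N * x (k + 1) t := by
    intro k t
    have : x (k + 1) t = (2 * (N : ℝ≥0∞))⁻¹ * MM volume (x k) t := rfl
    rw [this, ← mul_assoc, ENNReal.mul_inv_cancel h2N h2N', one_mul]
  have hxint : ∀ k, ∫⁻ t, x k t ^ p ∂ν ≤ (2⁻¹ : ℝ≥0∞) ^ k * ∫⁻ t, h t ^ p ∂ν := by
    intro k
    induction k with
    | zero => simp [hx, iter]
    | succ k ih =>
      have hc : ((2 * N : ℝ≥0∞)⁻¹) ^ p * C ≤ 2⁻¹ := by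
        have h1 : ((2 * N : ℝ≥0∞)⁻¹) ^ p ≤ (2 * N : ℝ≥0∞)⁻¹ := by
          refine ENNReal.rpow_le_self_of_le_one ?_ hp.le
          rw [ENNReal.inv_le_one]
          calc (1 : ℝ≥0∞) = 1 * 1 := by simp
            _ ≤ 2 * N := by gcongr <;> [norm_num; exact_mod_cast hN1]
        calc ((2 * N : ℝ≥0∞)⁻¹) ^ p * C ≤ (2 * N : ℝ≥0∞)⁻¹ * N := by
              gcongr; exact le_max_right _ _
          _ = 2⁻¹ * ((N : ℝ≥0∞)⁻¹ * N) := by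
              rw [ENNReal.mul_inv (by simp) (by simp), mul_assoc]
          _ ≤ 2⁻¹ * 1 := by gcongr; exact ENNReal.inv_mul_le_one _
          _ = 2⁻¹ := mul_one _
      calc ∫⁻ t, x (k + 1) t ^ p ∂ν
          = ((2 * N : ℝ≥0∞)⁻¹) ^ p * ∫⁻ t, MM volume (x k) t ^ p ∂ν := by
            rw [← lintegral_const_mul _ ((measurable_MM _ _).pow_const _)]
            congr 1; ext t
            rw [← ENNReal.mul_rpow_of_nonneg _ _ hp0.le]; rfl
        _ ≤ ((2 * N : ℝ≥0∞)⁻¹) ^ p * (C * ((2⁻¹ : ℝ≥0∞) ^ k * ∫⁻ t, h t ^ p ∂ν)) := by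
            gcongr
            exact (hM _ (hxm k)).trans (by gcongr)
        _ = (((2 * N : ℝ≥0∞)⁻¹) ^ p * C) * ((2⁻¹ : ℝ≥0∞) ^ k * ∫⁻ t, h t ^ p ∂ν) := by ring
        _ ≤ 2⁻¹ * ((2⁻¹ : ℝ≥0∞) ^ k * ∫⁻ t, h t ^ p ∂ν) := by gcongr
        _ = _ := by rw [pow_succ]; ring
  have hgeo : ∑' k : ℕ, (2⁻¹ : ℝ≥0∞) ^ k = 2 := by
    rw [ENNReal.tsum_geometric, ENNReal.one_sub_inv_two, inv_inv]
  set H : ℝ → ℝ≥0∞ := fun t => ∑' k, (2⁻¹ : ℝ≥0∞) ^ k * x k t with hH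
  have hHm : Measurable H := Measurable.tsum fun k => (hxm k).const_mul _
  have hHk : ∀ k t, (2⁻¹ : ℝ≥0∞) ^ k * x k t ≤ H t := fun k t =>
    ENNReal.le_tsum (f := fun k => (2⁻¹ : ℝ≥0∞) ^ k * x k t) k
  refine ⟨H, hHm, fun t => ?_, fun t => ?_, ?_, fun hne t => ?_⟩
  · simpa [hx, iter] using hHk 0 t
  · calc MM volume H t ≤ ∑' k, MM volume (fun s => (2⁻¹ : ℝ≥0∞) ^ k * x k s) t :=
          MM_tsum_le _ (fun k => (hxm k).const_mul _) t
      _ = ∑' k, 4 * N * ((2⁻¹ : ℝ≥0∞) ^ (k + 1) * x (k + 1) t) := by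
          congr 1; ext k
          rw [MM_const_mul _ (hxm k), hx1, pow_succ]
          have : (4 : ℝ≥0∞) * 2⁻¹ = 2 := by
            rw [show (4 : ℝ≥0∞) = 2 * 2 by norm_num, mul_assoc,
              ENNReal.mul_inv_cancel (by simp) (by simp), mul_one]
          calc (2⁻¹ : ℝ≥0∞) ^ k * (2 * N * x (k + 1) t)
              = 2 * ((2⁻¹ : ℝ≥0∞) ^ k * (N * x (k + 1) t)) := by ring
            _ = (4 * 2⁻¹) * ((2⁻¹ : ℝ≥0∞) ^ k * (N * x (k + 1) t)) := by rw [this]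
            _ = _ := by ring
      _ = 4 * N * ∑' k, ((2⁻¹ : ℝ≥0∞) ^ (k + 1) * x (k + 1) t) := ENNReal.tsum_mul_left
      _ ≤ (4 * N : ℝ≥0) * H t := by
          push_cast
          gcongr
          exact ENNReal.tsum_comp_le_tsum_of_injective (add_left_injective 1)
            (fun k => (2⁻¹ : ℝ≥0∞) ^ k * x k t)
  · have h1 : ∀ t, H t ^ p ≤ 2 ^ p * ∑' k, x k t ^ p := by
      intro t
      set X := (∑' k, x k t ^ p) ^ (1 / p) with hX
      have hxX : ∀ k, x k t ≤ X := by
        intro k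
        rw [hX, one_div, ENNReal.le_rpow_inv_iff hp0]
        exact ENNReal.le_tsum (f := fun k => x k t ^ p) k
      have hHX : H t ≤ 2 * X := by
        calc H t ≤ ∑' k : ℕ, (2⁻¹ : ℝ≥0∞) ^ k * X :=
              ENNReal.tsum_le_tsum fun k => by gcongr; exact hxX k
          _ = 2 * X := by rw [ENNReal.tsum_mul_right, hgeo]
      calc H t ^ p ≤ (2 * X) ^ p := by gcongr
        _ = _ := by
          rw [ENNReal.mul_rpow_of_nonneg _ _ hp0.le, hX, ← ENNReal.rpow_mul,
            one_div_mul_cancel hp0.ne', ENNReal.rpow_one]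
    calc ∫⁻ t, H t ^ p ∂ν ≤ ∫⁻ t, 2 ^ p * ∑' k, x k t ^ p ∂ν := lintegral_mono h1
      _ = 2 ^ p * ∑' k, ∫⁻ t, x k t ^ p ∂ν := by
          rw [lintegral_const_mul _ (Measurable.tsum fun k => (hxm k).pow_const p),
            lintegral_tsum fun k => ((hxm k).pow_const p).aemeasurable]
      _ ≤ 2 ^ p * ∑' k : ℕ, (2⁻¹ : ℝ≥0∞) ^ k * ∫⁻ t, h t ^ p ∂ν := by
          gcongr with k; exact hxint k
      _ = _ := by
          rw [ENNReal.tsum_mul_right, hgeo, ENNReal.rpow_add _ _ (by simp) (by simp),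
            ENNReal.rpow_one, mul_assoc]
  · intro h0
    have h1 : x 1 t = 0 := by
      have := (hHk 1 t).trans_eq h0
      simpa using this
    refine hne (ae_zero_of_MM_eq_zero hm (t := t) ?_)
    have h2 := hx1 0 t
    rw [zero_add, h1, mul_zero] at h2
    exact h2

/-! ### Extrapolation -/

lemma A1.interp {L : ℝ≥0} {b H : ℝ → ℝ≥0∞} (hb : A1 L b) (hH : A1 L H) {θ : ℝ} (h0 : 0 ≤ θ)
    (h1 : θ ≤ 1) : A1 L (fun t => b t ^ (1 - θ) * H t ^ θ) := by
  have h1' : 0 ≤ 1 - θ := by linarith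
  have hpow : ∀ x : ℝ≥0∞, x ^ (1 - θ) * x ^ θ = x := fun x => by
    rw [← ENNReal.rpow_add_of_nonneg _ _ h1' h0, sub_add_cancel, ENNReal.rpow_one]
  refine ⟨(hb.meas.pow_const _).mul (hH.meas.pow_const _), fun t => ?_, ?_, fun t => ?_⟩
  · have e1 := hb.pos t
    have e2 := hH.pos t
    simp only [ne_eq, mul_eq_zero, ENNReal.rpow_eq_zero_iff, e1, e2, false_and, false_or, not_or]
    exact ⟨fun h => by linarith [h.2], fun h => by linarith [h.2]⟩
  · filter_upwards [ae_ne_of hb, ae_ne_of hH] with t ⟨x, hx⟩ ⟨y, hy⟩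
    rw [hx, hy, E_rpow, E_rpow, E_mul]
    exact E_ne_top _
  · refine MM_le fun Q hQ => ?_
    calc avg volume (fun t => b t ^ (1 - θ) * H t ^ θ) Q
        ≤ (volume (QI Q))⁻¹ * ((∫⁻ s in QI Q, b s) ^ (1 - θ) * (∫⁻ s in QI Q, H s) ^ θ) := by
          unfold avg
          gcongr
          exact ENNReal.lintegral_mul_norm_pow_le hb.meas.aemeasurable hH.meas.aemeasurable h1' h0
            (by ring)
      _ = avg volume b Q ^ (1 - θ) * avg volume H Q ^ θ := by
          unfold avg
          rw [ENNReal.mul_rpow_of_nonneg _ _ h1', ENNReal.mul_rpow_of_nonneg _ _ h0]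
          conv_lhs => rw [← hpow (volume (QI Q))⁻¹]
          ring
      _ ≤ (L * b t) ^ (1 - θ) * (L * H t) ^ θ := by
          gcongr
          · exact hb.avg_le hQ
          · exact hH.avg_le hQ
      _ = L * (b t ^ (1 - θ) * H t ^ θ) := by
          rw [ENNReal.mul_rpow_of_nonneg _ _ h1', ENNReal.mul_rpow_of_nonneg _ _ h0]
          conv_rhs => rw [← hpow (L : ℝ≥0∞)]
          ring

lemma ae_E {K L : ℝ≥0} {a b : ℝ → ℝ≥0∞} (ha : A1 K a) (hb : A1 L b) :
    ∀ᵐ t, ∃ x y, a t = E x ∧ b t = E y := by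
  filter_upwards [ae_ne_of ha, ae_ne_of hb] with t ⟨x, hx⟩ ⟨y, hy⟩ using ⟨x, y, hx, hy⟩

lemma ae_ne_top_of_lintegral {H w : ℝ → ℝ≥0∞} {p : ℝ} (hp : 0 < p) (hH : Measurable H)
    (hw : Measurable w) (hw0 : ∀ᵐ t, w t ≠ 0) (h : ∫⁻ t, H t ^ p * w t ≠ ∞) :
    ∀ᵐ t, H t ≠ ∞ := by
  filter_upwards [hw0, ae_lt_top ((hH.pow_const p).mul hw) h] with t h1 h2 h3
  rw [Pi.mul_apply, h3, ENNReal.top_rpow_of_pos hp, ENNReal.top_mul h1] at h2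
  exact lt_irrefl _ h2

/-- Extrapolation, from the exponent `r` to a smaller exponent `p`. The weight with exponent `r`
is `w * H ^ (p - r)`, where `H` is a Rubio de Francia majorant of `g`. -/
lemma extrap_down {p r : ℝ} (hp : 1 < p) (hpr : p < r) (K : ℝ≥0) : ∃ K' : ℝ≥0, ∀ C0 : ℝ≥0,
    ∃ C : ℝ≥0, ∀ G g : ℝ → ℝ≥0∞, Measurable G → Measurable g →
      (∀ a b, A1 K' a → A1 K' b → ∫⁻ t, G t ^ r * (a t * b t ^ (1 - r)) ≤
        C0 * ∫⁻ t, g t ^ r * (a t * b t ^ (1 - r))) →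
      ∀ a b, A1 K a → A1 K b → ∫⁻ t, G t ^ p * (a t * b t ^ (1 - p)) ≤
        C * ∫⁻ t, g t ^ p * (a t * b t ^ (1 - p)) := by
  have hp0 : 0 < p := by linarith
  have hr0 : 0 < r := by linarith
  have hr1 : 0 < r - 1 := by linarith
  obtain ⟨N, hN⟩ := weighted hp K
  set L : ℝ≥0 := 4 * max 1 N with hL
  refine ⟨max K L, fun C0 => ?_⟩
  set Ce : ℝ≥0∞ := (C0 : ℝ≥0∞) ^ (p / r) * 2 ^ (p + 1) + 1 with hCe
  have hpr0 : 0 ≤ p / r := by positivity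
  have hpr1 : 0 ≤ 1 - p / r := by
    rw [sub_nonneg, div_le_one hr0]; exact hpr.le
  have hCetop : Ce ≠ ∞ := by
    refine ENNReal.add_ne_top.2 ⟨ENNReal.mul_ne_top ?_ ?_, by simp⟩
    · exact ENNReal.rpow_ne_top_of_nonneg hpr0 ENNReal.coe_ne_top
    · exact ENNReal.rpow_ne_top_of_nonneg (by linarith) (by simp)
  refine ⟨Ce.toNNReal, fun G g hG hg hyp a b ha hb => ?_⟩
  rw [ENNReal.coe_toNNReal hCetop]
  have haK := ha.mono (le_max_left K L)
  have hbK := hb.mono (le_max_left K L)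
  set w : ℝ → ℝ≥0∞ := fun t => a t * b t ^ (1 - p) with hw
  have hwm : Measurable w := ha.meas.mul (hb.meas.pow_const _)
  have hw0 : ∀ᵐ t, w t ≠ 0 := by
    filter_upwards [ae_E ha hb] with t ⟨x, y, hx, hy⟩
    simp only [hw, hx, hy, E_rpow, E_mul]; exact E_ne_zero _
  by_cases hg0 : g =ᵐ[volume] 0
  · have h1 := hyp a b haK hbK
    have h2 : ∫⁻ t, g t ^ r * (a t * b t ^ (1 - r)) = 0 := by
      rw [lintegral_eq_zero_iff' (by
        exact ((hg.pow_const _).mul (ha.meas.mul (hb.meas.pow_const _))).aemeasurable)]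
      filter_upwards [hg0] with t ht
      simp [ht, hr0]
    rw [h2, mul_zero, nonpos_iff_eq_zero, lintegral_eq_zero_iff (by
        exact ((hG.pow_const _).mul (ha.meas.mul (hb.meas.pow_const _))))] at h1
    have h3 : ∫⁻ t, G t ^ p * w t = 0 := by
      refine (lintegral_eq_zero_iff ((hG.pow_const _).mul hwm)).2 ?_
      filter_upwards [h1, ae_E ha hb] with t ht ⟨x, y, hx, hy⟩
      simp only [Pi.zero_apply, hx, hy, E_rpow, E_mul, mul_eq_zero, E_ne_zero, or_false,
        ENNReal.rpow_eq_zero_iff_of_pos hr0] at ht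
      simp [ht, hp0]
    rw [h3]; exact zero_le
  by_cases htop : ∫⁻ t, g t ^ p * w t = ∞
  · rw [htop, ENNReal.mul_top (by simp [hCe])]; exact le_top
  have hν : ∀ f : ℝ → ℝ≥0∞, Measurable f →
      ∫⁻ t, f t ^ p ∂(volume.withDensity w) = ∫⁻ t, f t ^ p * w t := fun f hf => by
    rw [lintegral_withDensity_eq_lintegral_mul _ hwm (hf.pow_const _)]
    simp only [Pi.mul_apply, mul_comm]
  obtain ⟨H, hHm, hgH, hHL, hHint, hH0⟩ := rubio hp N (volume.withDensity w) (fun f hf => by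
    rw [hν _ (measurable_MM _ _), hν _ hf]; exact hN a b ha hb f hf) hg
  rw [hν _ hHm, hν _ hg] at hHint
  have h2t : (2 : ℝ≥0∞) ^ (p + 1) ≠ ∞ := ENNReal.rpow_ne_top_of_nonneg (by linarith) (by simp)
  have hA : A1 L H := ⟨hHm, hH0 hg0, ae_ne_top_of_lintegral hp0 hHm hwm hw0
    (ne_top_of_le_ne_top (ENNReal.mul_ne_top h2t htop) hHint), hHL⟩
  set θ := (r - p) / (r - 1) with hθ
  have hθ0 : 0 ≤ θ := div_nonneg (by linarith) hr1.le
  have hθ1 : θ ≤ 1 := by rw [hθ, div_le_one hr1]; linarith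
  have hbt := hbK.interp (hA.mono (le_max_right K L)) hθ0 hθ1
  have h1 := hyp a _ haK hbt
  set w2 : ℝ → ℝ≥0∞ := fun t => a t * (b t ^ (1 - θ) * H t ^ θ) ^ (1 - r) with hw2
  have hw2m : Measurable w2 := ha.meas.mul (hbt.meas.pow_const _)
  have hθr : θ * (1 - r) = p - r := by rw [hθ]; field_simp; ring
  have hw2E : ∀ᵐ t, ∃ v z, w t = E v ∧ H t = E z ∧ w2 t = E (v + (p - r) * z) := by
    filter_upwards [ae_E ha hb, ae_ne_of hA] with t ⟨x, y, hx, hy⟩ ⟨z, hz⟩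
    refine ⟨x + y * (1 - p), z, ?_, hz, ?_⟩
    · simp only [hw, hx, hy, E_rpow, E_mul]
    · simp only [hw2, hx, hy, hz, E_rpow, E_mul]
      congr 1
      linear_combination (z - y) * hθr
  set J := ∫⁻ t, H t ^ p * w t with hJ
  have h2 : ∫⁻ t, g t ^ r * w2 t ≤ J := by
    refine lintegral_mono_ae ?_
    filter_upwards [hw2E] with t ⟨v, z, hv, hz, h2⟩
    calc g t ^ r * w2 t ≤ H t ^ r * w2 t := by gcongr; exact hgH t
      _ = H t ^ p * w t := by
        rw [hz, h2, hv, E_rpow, E_rpow, E_mul, E_mul]; congr 1; ring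
  calc ∫⁻ t, G t ^ p * w t
      = ∫⁻ t, (G t ^ r * w2 t) ^ (p / r) * (H t ^ p * w t) ^ (1 - p / r) := by
        refine lintegral_congr_ae ?_
        filter_upwards [hw2E] with t ⟨v, z, hv, hz, h2⟩
        rw [hz, h2, hv, ENNReal.mul_rpow_of_nonneg _ _ hpr0, ← ENNReal.rpow_mul,
          mul_div_cancel₀ _ hr0.ne', E_rpow, E_rpow, E_mul, E_rpow, mul_assoc, E_mul]
        congr 2; field_simp; ring
    _ ≤ (∫⁻ t, G t ^ r * w2 t) ^ (p / r) * J ^ (1 - p / r) :=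
        ENNReal.lintegral_mul_norm_pow_le ((hG.pow_const _).mul hw2m).aemeasurable
          ((hHm.pow_const _).mul hwm).aemeasurable hpr0 hpr1 (by ring)
    _ ≤ (C0 * J) ^ (p / r) * J ^ (1 - p / r) := by
        gcongr; exact h1.trans (by gcongr)
    _ = (C0 : ℝ≥0∞) ^ (p / r) * J := by
        rw [ENNReal.mul_rpow_of_nonneg _ _ hpr0, mul_assoc,
          ← ENNReal.rpow_add_of_nonneg _ _ hpr0 hpr1, add_sub_cancel, ENNReal.rpow_one]
    _ ≤ (C0 : ℝ≥0∞) ^ (p / r) * (2 ^ (p + 1) * ∫⁻ t, g t ^ p * w t) := by gcongr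
    _ ≤ Ce * ∫⁻ t, g t ^ p * w t := by
        rw [← mul_assoc]; gcongr; exact le_self_add

/-- Extrapolation, from the exponent `r` to a larger exponent `p`, for a function with finite
weighted norm. The weight `Ψ * b ^ (1 - r)` is obtained from a Rubio de Francia majorant `Ψ` of
the function that represents the norm of `G` by duality. -/
lemma extrap_up_aux {p r : ℝ} (hr : 1 < r) (hrp : r < p) (K : ℝ≥0) : ∃ K' : ℝ≥0, ∀ C0 : ℝ≥0,
    ∃ C : ℝ≥0, ∀ G₁ G g : ℝ → ℝ≥0∞, Measurable G₁ → Measurable G → Measurable g →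
      (∀ t, G₁ t ≤ G t) →
      (∀ a b, A1 K' a → A1 K' b → ∫⁻ t, G t ^ r * (a t * b t ^ (1 - r)) ≤
        C0 * ∫⁻ t, g t ^ r * (a t * b t ^ (1 - r))) →
      ∀ a b, A1 K a → A1 K b → ∫⁻ t, G₁ t ^ p * (a t * b t ^ (1 - p)) ≠ ∞ →
        ∫⁻ t, G₁ t ^ p * (a t * b t ^ (1 - p)) ≤ C * ∫⁻ t, g t ^ p * (a t * b t ^ (1 - p)) := by
  have hp0 : 0 < p := by linarith
  have hr0 : 0 < r := by linarith
  have hpr0 : 0 < p - r := by linarith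
  set e := p / (p - r) with he
  have he1 : 1 < e := by rw [he, lt_div_iff₀ hpr0]; linarith
  have he0 : 0 < e := by linarith
  obtain ⟨N, hN⟩ := weighted he1 K
  set L : ℝ≥0 := 4 * max 1 N with hL
  refine ⟨max K L, fun C0 => ?_⟩
  have hrp0 : 0 ≤ r / p := by positivity
  have hei : 0 ≤ 1 / e := by positivity
  have hsum : r / p + 1 / e = 1 := by rw [he]; field_simp; ring
  have h2t : (2 : ℝ≥0∞) ^ (e + 1) ≠ ∞ := ENNReal.rpow_ne_top_of_nonneg (by linarith) (by simp)
  set D : ℝ≥0∞ := C0 * ((2 : ℝ≥0∞) ^ (e + 1)) ^ (1 / e) with hD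
  have hDtop : D ^ (p / r) ≠ ∞ := by
    refine ENNReal.rpow_ne_top_of_nonneg (by positivity) (ENNReal.mul_ne_top ENNReal.coe_ne_top ?_)
    exact ENNReal.rpow_ne_top_of_nonneg hei h2t
  refine ⟨(D ^ (p / r)).toNNReal, fun G₁ G g hG₁ hG hg hle hyp a b ha hb htop => ?_⟩
  rw [ENNReal.coe_toNNReal hDtop]
  set A := ∫⁻ t, G₁ t ^ p * (a t * b t ^ (1 - p)) with hA
  set B := ∫⁻ t, g t ^ p * (a t * b t ^ (1 - p)) with hB
  rcases eq_or_ne A 0 with hA0 | hA0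
  · rw [hA0]; exact zero_le
  set w : ℝ → ℝ≥0∞ := fun t => b t * a t ^ (1 - e) with hw
  have hwm : Measurable w := hb.meas.mul (ha.meas.pow_const _)
  have hw0 : ∀ᵐ t, w t ≠ 0 := by
    filter_upwards [ae_E ha hb] with t ⟨x, y, hx, hy⟩
    simp only [hw, hx, hy, E_rpow, E_mul]; exact E_ne_zero _
  have hν : ∀ f : ℝ → ℝ≥0∞, Measurable f →
      ∫⁻ t, f t ^ e ∂(volume.withDensity w) = ∫⁻ t, f t ^ e * w t := fun f hf => by
    rw [lintegral_withDensity_eq_lintegral_mul _ hwm (hf.pow_const _)]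
    simp only [Pi.mul_apply, mul_comm]
  set Φ : ℝ → ℝ≥0∞ := fun t => G₁ t ^ (p - r) * (a t * b t ^ (r - p)) with hΦ
  have hΦm : Measurable Φ := (hG₁.pow_const _).mul (ha.meas.mul (hb.meas.pow_const _))
  obtain ⟨Ψ, hΨm, hΦΨ, hΨL, hΨint, hΨ0⟩ := rubio he1 N (volume.withDensity w) (fun f hf => by
    rw [hν _ (measurable_MM _ _), hν _ hf]; exact hN b a hb ha f hf) hΦm
  rw [hν _ hΨm, hν _ hΦm] at hΨint
  have hΦA : ∫⁻ t, Φ t ^ e * w t = A := by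
    refine lintegral_congr_ae ?_
    filter_upwards [ae_E ha hb] with t ⟨x, y, hx, hy⟩
    simp only [hΦ, hw, hx, hy, E_rpow, E_mul]
    rw [ENNReal.mul_rpow_of_nonneg _ _ he0.le, ← ENNReal.rpow_mul, E_rpow, mul_assoc, E_mul]
    congr 2
    · rw [he]; field_simp
    · rw [he]; field_simp; ring
  have hΦ0 : ¬ Φ =ᵐ[volume] 0 := by
    intro h
    refine hA0 ?_
    rw [← hΦA]
    refine (lintegral_eq_zero_iff ((hΦm.pow_const _).mul hwm)).2 ?_
    filter_upwards [h] with t ht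
    simp [ht, he0]
  rw [hΦA] at hΨint
  have hΨ : A1 L Ψ := ⟨hΨm, hΨ0 hΦ0, ae_ne_top_of_lintegral he0 hΨm hwm hw0
    (ne_top_of_le_ne_top (ENNReal.mul_ne_top h2t htop) hΨint), hΨL⟩
  have h1 := hyp Ψ b (hΨ.mono (le_max_right K L)) (hb.mono (le_max_left K L))
  have h2 : A ≤ D * B ^ (r / p) * A ^ (1 / e) := by
    calc A ≤ ∫⁻ t, G t ^ r * (Ψ t * b t ^ (1 - r)) := by
          refine lintegral_mono_ae ?_
          filter_upwards [ae_E ha hb] with t ⟨x, y, hx, hy⟩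
          calc G₁ t ^ p * (a t * b t ^ (1 - p)) = G₁ t ^ r * (Φ t * b t ^ (1 - r)) := by
                simp only [hΦ]
                rw [mul_assoc, ← mul_assoc (G₁ t ^ r), ← ENNReal.rpow_add_of_nonneg _ _ hr0.le
                  hpr0.le]
                simp only [hx, hy, E_rpow, E_mul]
                congr 2 <;> ring
            _ ≤ _ := by
                gcongr
                · exact hle t
                · exact hΦΨ t
      _ ≤ C0 * ∫⁻ t, g t ^ r * (Ψ t * b t ^ (1 - r)) := h1
      _ = C0 * ∫⁻ t, (g t ^ p * (a t * b t ^ (1 - p))) ^ (r / p) * (Ψ t ^ e * w t) ^ (1 / e) := by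
          congr 1
          refine lintegral_congr_ae ?_
          filter_upwards [ae_E ha hb, ae_ne_of hΨ] with t ⟨x, y, hx, hy⟩ ⟨z, hz⟩
          simp only [hw, hx, hy, hz]
          rw [ENNReal.mul_rpow_of_nonneg _ _ hrp0, ← ENNReal.rpow_mul, mul_div_cancel₀ _ hp0.ne']
          simp only [E_rpow, E_mul]
          rw [mul_assoc, E_mul]
          congr 2
          rw [he]; field_simp; ring
      _ ≤ C0 * (B ^ (r / p) * (2 ^ (e + 1) * A) ^ (1 / e)) := by
          gcongr
          refine (ENNReal.lintegral_mul_norm_pow_le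
            ((hg.pow_const _).mul (ha.meas.mul (hb.meas.pow_const _))).aemeasurable
            ((hΨm.pow_const _).mul hwm).aemeasurable hrp0 hei hsum).trans ?_
          gcongr
          · exact le_refl B
          · exact hΨint
      _ = _ := by
          rw [ENNReal.mul_rpow_of_nonneg _ _ hei, hD]; ring
  have h3 : A ^ (r / p) ≤ D * B ^ (r / p) := by
    have hAe0 : A ^ (1 / e) ≠ 0 := by
      simp [hA0, htop]
    have hAet : A ^ (1 / e) ≠ ∞ := ENNReal.rpow_ne_top_of_nonneg hei htop
    refine (ENNReal.mul_le_mul_iff_left hAe0 hAet).1 ?_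
    rw [← ENNReal.rpow_add_of_nonneg _ _ hrp0 hei, hsum, ENNReal.rpow_one]
    exact h2
  calc A = (A ^ (r / p)) ^ (p / r) := by
        rw [← ENNReal.rpow_mul, div_mul_div_cancel₀ hp0.ne', div_self hr0.ne', ENNReal.rpow_one]
    _ ≤ (D * B ^ (r / p)) ^ (p / r) := by gcongr
    _ = D ^ (p / r) * B := by
        rw [ENNReal.mul_rpow_of_nonneg _ _ (by positivity), ← ENNReal.rpow_mul,
          div_mul_div_cancel₀ hp0.ne', div_self hr0.ne', ENNReal.rpow_one]

lemma extrap_up {p r : ℝ} (hr : 1 < r) (hrp : r < p) (K : ℝ≥0) : ∃ K' : ℝ≥0, ∀ C0 : ℝ≥0,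
    ∃ C : ℝ≥0, ∀ G g : ℝ → ℝ≥0∞, Measurable G → Measurable g →
      (∀ a b, A1 K' a → A1 K' b → ∫⁻ t, G t ^ r * (a t * b t ^ (1 - r)) ≤
        C0 * ∫⁻ t, g t ^ r * (a t * b t ^ (1 - r))) →
      ∀ a b, A1 K a → A1 K b → ∫⁻ t, G t ^ p * (a t * b t ^ (1 - p)) ≤
        C * ∫⁻ t, g t ^ p * (a t * b t ^ (1 - p)) := by
  have hp0 : 0 < p := by linarith
  obtain ⟨K', h⟩ := extrap_up_aux hr hrp K
  refine ⟨K', fun C0 => ?_⟩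
  obtain ⟨C, h⟩ := h C0
  refine ⟨C, fun G g hG hg hyp a b ha hb => ?_⟩
  set w : ℝ → ℝ≥0∞ := fun t => a t * b t ^ (1 - p) with hw
  have hwm : Measurable w := ha.meas.mul (hb.meas.pow_const _)
  set S : ℕ → Set ℝ := fun k => Icc (-(k : ℝ)) k ∩ {t | w t ≤ k} with hS
  have hSm : ∀ k, MeasurableSet (S k) := fun k =>
    measurableSet_Icc.inter (measurableSet_le hwm measurable_const)
  have hSmono : Monotone S := by
    intro k l hkl t ht
    have h1 : (k : ℝ) ≤ l := by exact_mod_cast hkl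
    have h2 : (k : ℝ≥0∞) ≤ l := by exact_mod_cast hkl
    exact ⟨⟨(neg_le_neg h1).trans ht.1.1, ht.1.2.trans h1⟩, le_trans ht.2 h2⟩
  set T : ℕ → ℝ → ℝ≥0∞ := fun k => (S k).indicator (fun t => min (G t) k) with hT
  have hTm : ∀ k, Measurable (T k) := fun k => (hG.min measurable_const).indicator (hSm k)
  have hTle : ∀ k t, T k t ≤ G t := fun k t => by
    by_cases ht : t ∈ S k
    · simp only [hT, indicator_of_mem ht]; exact min_le_left _ _
    · simp only [hT, indicator_of_notMem ht]; exact zero_le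
  have hTmono : ∀ t, Monotone fun k => T k t := by
    intro t k l hkl
    by_cases ht : t ∈ S k
    · simp only [hT, indicator_of_mem ht, indicator_of_mem (hSmono hkl ht)]
      gcongr
    · simp only [hT, indicator_of_notMem ht]; exact zero_le
  have hfin : ∀ k, ∫⁻ t, T k t ^ p * w t ≠ ∞ := by
    intro k
    have h1 : ∀ t, T k t ^ p * w t ≤ (Icc (-(k : ℝ)) k).indicator (fun _ => (k : ℝ≥0∞) ^ p * k) t := by
      intro t
      by_cases ht : t ∈ S k
      · rw [indicator_of_mem ht.1]
        simp only [hT, indicator_of_mem ht]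
        gcongr
        · exact min_le_right _ _
        · exact ht.2
      · simp only [hT, indicator_of_notMem ht, ENNReal.zero_rpow_of_pos hp0, zero_mul]
        exact zero_le
    refine ne_top_of_le_ne_top ?_ (lintegral_mono h1)
    rw [lintegral_indicator_const measurableSet_Icc, Real.volume_Icc]
    refine ENNReal.mul_ne_top (ENNReal.mul_ne_top ?_ (by simp)) (by simp)
    exact ENNReal.rpow_ne_top_of_nonneg hp0.le (by simp)
  have hlim : Tendsto (fun k => ∫⁻ t, T k t ^ p * w t) atTop (nhds (∫⁻ t, G t ^ p * w t)) := by
    refine lintegral_tendsto_of_tendsto_of_monotone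
      (fun k => (((hTm k).pow_const _).mul hwm).aemeasurable) ?_ ?_
    · refine ae_of_all _ fun t k l hkl => ?_
      have := hTmono t hkl
      simp only at this ⊢
      gcongr
    · filter_upwards [ae_E ha hb] with t ⟨x, y, hx, hy⟩
      have hwt : w t ≠ ∞ := by
        simp only [hw, hx, hy, E_rpow, E_mul]; exact E_ne_top _
      have h1 : Tendsto (fun k : ℕ => min (G t) k) atTop (nhds (G t)) := by
        have := (tendsto_const_nhds (x := G t)).min ENNReal.tendsto_nat_nhds_top
        rwa [min_eq_left le_top] at this
      have h2 : ∀ᶠ k : ℕ in atTop, t ∈ S k := by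
        obtain ⟨m, hm⟩ := exists_nat_gt |t|
        obtain ⟨l, hl⟩ := ENNReal.exists_nat_gt hwt
        filter_upwards [eventually_ge_atTop m, eventually_ge_atTop l] with k hk1 hk2
        have h3 : (m : ℝ) ≤ k := by exact_mod_cast hk1
        have h4 : (l : ℝ≥0∞) ≤ k := by exact_mod_cast hk2
        have h5 := abs_le.1 (hm.le.trans h3)
        exact ⟨⟨h5.1, h5.2⟩, hl.le.trans h4⟩
      have h3 : Tendsto (fun k => T k t) atTop (nhds (G t)) := by
        refine h1.congr' ?_
        filter_upwards [h2] with k hk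
        simp only [hT, indicator_of_mem hk]
      exact ENNReal.Tendsto.mul_const ((ENNReal.continuous_rpow_const.tendsto _).comp h3)
        (Or.inr hwt)
  exact le_of_tendsto' hlim fun k =>
    h (T k) G g (hTm k) hG hg (hTle k) hyp a b ha hb (hfin k)

/-- Rubio de Francia extrapolation for weights of the form `a * b ^ (1 - p)` with `a, b ∈ A₁`. -/
lemma extrap {p r : ℝ} (hp : 1 < p) (hr : 1 < r) (K : ℝ≥0) : ∃ K' : ℝ≥0, ∀ C0 : ℝ≥0,
    ∃ C : ℝ≥0, ∀ G g : ℝ → ℝ≥0∞, Measurable G → Measurable g →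
      (∀ a b, A1 K' a → A1 K' b → ∫⁻ t, G t ^ r * (a t * b t ^ (1 - r)) ≤
        C0 * ∫⁻ t, g t ^ r * (a t * b t ^ (1 - r))) →
      ∀ a b, A1 K a → A1 K b → ∫⁻ t, G t ^ p * (a t * b t ^ (1 - p)) ≤
        C * ∫⁻ t, g t ^ p * (a t * b t ^ (1 - p)) := by
  rcases lt_trichotomy p r with h | rfl | h
  · exact extrap_down hp h K
  · exact ⟨K, fun C0 => ⟨C0, fun G g _ _ hyp => hyp⟩⟩
  · exact extrap_up hr h K

/-! ### Mixed norms of sequences of functions -/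

lemma vecNorm_mono (u : ℝ≥0∞) {a b : ℕ → ℝ≥0∞} (h : ∀ j, a j ≤ b j) : vecNorm u a ≤ vecNorm u b := by
  unfold vecNorm
  split_ifs
  · exact iSup_mono h
  · gcongr with j
    exact h j

lemma toReal_gt {u : ℝ≥0∞} (hu : 1 < u) (h : u ≠ ∞) : 1 < u.toReal := by
  simpa using (ENNReal.toReal_lt_toReal (by simp) h).2 hu

lemma vecNorm_const_mul {u : ℝ≥0∞} (hu : 1 < u) (c : ℝ≥0∞) (a : ℕ → ℝ≥0∞) :
    vecNorm u (fun j => c * a j) = c * vecNorm u a := by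
  unfold vecNorm
  split_ifs with h
  · rw [ENNReal.mul_iSup]
  · have h0 : 0 < u.toReal := by linarith [toReal_gt hu h]
    simp_rw [ENNReal.mul_rpow_of_nonneg _ _ h0.le]
    rw [ENNReal.tsum_mul_left, ENNReal.mul_rpow_of_nonneg _ _ (by positivity), ← ENNReal.rpow_mul,
      mul_one_div_cancel h0.ne', ENNReal.rpow_one]

lemma measurable_vecNorm {α : Type*} [MeasurableSpace α] (u : ℝ≥0∞) {f : ℕ → α → ℝ≥0∞}
    (hf : ∀ j, Measurable (f j)) : Measurable fun x => vecNorm u fun j => f j x := by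
  unfold vecNorm
  split_ifs
  · exact Measurable.iSup hf
  · exact (Measurable.tsum fun j => (hf j).pow_const _).pow_const _

lemma lpNormE_of_ne_top {p : ℝ≥0∞} (hp : p ≠ ∞) (g : ℝ → ℝ≥0∞) :
    lpNormE p g volume = (∫⁻ t, g t ^ p.toReal) ^ (1 / p.toReal) := by
  unfold lpNormE; rw [if_neg hp]

lemma mixedNorm_mono : ∀ (n : ℕ) (q : Fin n → ℝ≥0∞), (∀ i, q i ≠ ∞) →
    ∀ {f g : (Fin n → ℝ) → ℝ≥0∞}, (∀ x, f x ≤ g x) → mixedNorm n q f ≤ mixedNorm n q g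
  | 0, _, _, _, _, h => h _
  | n + 1, q, hq, f, g, h => by
      simp only [mixedNorm, lpNormE_of_ne_top (hq _)]
      gcongr with t
      exact mixedNorm_mono n _ (fun i => hq _) fun x => h _

lemma mixedNorm_const_mul {c : ℝ≥0∞} (hc : c ≠ ∞) : ∀ (n : ℕ) (q : Fin n → ℝ≥0∞),
    (∀ i, 1 < q i ∧ q i < ∞) → ∀ g : (Fin n → ℝ) → ℝ≥0∞,
      mixedNorm n q (fun x => c * g x) = c * mixedNorm n q g
  | 0, _, _, _ => rfl
  | n + 1, q, hq, g => by
      have h0 : 0 < (q (Fin.last n)).toReal := by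
        linarith [toReal_gt (hq (Fin.last n)).1 (hq (Fin.last n)).2.ne]
      simp only [mixedNorm, lpNormE_of_ne_top (hq _).2.ne]
      simp_rw [mixedNorm_const_mul hc n (fun i => q i.castSucc) (fun i => hq _),
        ENNReal.mul_rpow_of_nonneg _ _ h0.le]
      rw [lintegral_const_mul' _ _ (ENNReal.rpow_ne_top_of_nonneg h0.le hc),
        ENNReal.mul_rpow_of_nonneg _ _ (by positivity), ← ENNReal.rpow_mul,
        mul_one_div_cancel h0.ne', ENNReal.rpow_one]

lemma measurable_snoc (n : ℕ) :
    Measurable fun z : (Fin n → ℝ) × ℝ => (Fin.snoc z.1 z.2 : Fin (n + 1) → ℝ) := by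
  refine measurable_pi_iff.2 fun i => ?_
  induction i using Fin.lastCases with
  | last => simpa using measurable_snd
  | cast i =>
      simp only [Fin.snoc_castSucc]
      exact (measurable_pi_apply i).comp measurable_fst

lemma measurable_mixedNorm : ∀ (n : ℕ) (q : Fin n → ℝ≥0∞), (∀ i, q i ≠ ∞) →
    ∀ (α : Type) [MeasurableSpace α] (g : α → (Fin n → ℝ) → ℝ≥0∞),
      (Measurable fun z : α × (Fin n → ℝ) => g z.1 z.2) → Measurable fun a => mixedNorm n q (g a)
  | 0, _, _, _, _, _, hg => hg.comp (measurable_id.prodMk measurable_const)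
  | n + 1, q, hq, α, _, g, hg => by
      simp only [mixedNorm, lpNormE_of_ne_top (hq _)]
      have h := measurable_mixedNorm n (fun i => q i.castSucc) (fun i => hq _) (α × ℝ)
        (fun z x => g z.1 (Fin.snoc x z.2))
        (hg.comp (measurable_fst.fst.prodMk
          ((measurable_snoc n).comp (measurable_snd.prodMk measurable_fst.snd))))
      exact (Measurable.lintegral_prod_right' (h.pow_const _)).pow_const _

/-- The mixed norm of a sequence of functions, with `ℓ^u` as the innermost norm. -/
def V (n : ℕ) (q : Fin n → ℝ≥0∞) (u : ℝ≥0∞) (F : ℕ → (Fin n → ℝ) → ℝ≥0∞) : ℝ≥0∞ :=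
  mixedNorm n q (fun x => vecNorm u (fun j => F j x))

lemma V_mono {n : ℕ} {q : Fin n → ℝ≥0∞} (hq : ∀ i, 1 < q i ∧ q i < ∞) (u : ℝ≥0∞)
    {F G : ℕ → (Fin n → ℝ) → ℝ≥0∞} (h : ∀ j x, F j x ≤ G j x) : V n q u F ≤ V n q u G :=
  mixedNorm_mono n q (fun i => (hq i).2.ne) fun x => vecNorm_mono u fun j => h j x

lemma measurable_V {n : ℕ} {q : Fin n → ℝ≥0∞} (hq : ∀ i, 1 < q i ∧ q i < ∞) (u : ℝ≥0∞)
    {α : Type} [MeasurableSpace α] {F : α → ℕ → (Fin n → ℝ) → ℝ≥0∞}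
    (hF : ∀ j, Measurable fun z : α × (Fin n → ℝ) => F z.1 j z.2) :
    Measurable fun a => V n q u (F a) :=
  measurable_mixedNorm n q (fun i => (hq i).2.ne) α _ (measurable_vecNorm u hF)

lemma V_succ_rpow {n : ℕ} {q : Fin (n + 1) → ℝ≥0∞} (hq : ∀ i, 1 < q i ∧ q i < ∞) (u : ℝ≥0∞)
    (F : ℕ → (Fin (n + 1) → ℝ) → ℝ≥0∞) : V (n + 1) q u F ^ (q (Fin.last n)).toReal =
      ∫⁻ t, V n (fun i => q i.castSucc) u (fun j x => F j (Fin.snoc x t)) ^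
        (q (Fin.last n)).toReal := by
  have h0 : 0 < (q (Fin.last n)).toReal := by
    linarith [toReal_gt (hq (Fin.last n)).1 (hq (Fin.last n)).2.ne]
  simp only [V, mixedNorm, lpNormE_of_ne_top (hq _).2.ne]
  rw [← ENNReal.rpow_mul, one_div_mul_cancel h0.ne', ENNReal.rpow_one]

/-! ### Weighted vector-valued inequalities in one variable -/

lemma vector_weighted {u : ℝ≥0∞} (hu : 1 < u) {p : ℝ} (hp : 1 < p) (K : ℝ≥0) :
    ∃ C : ℝ≥0, ∀ a b, A1 K a → A1 K b → ∀ f : ℕ → ℝ → ℝ≥0∞, (∀ j, Measurable (f j)) →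
      ∫⁻ t, vecNorm u (fun j => MM volume (f j) t) ^ p * (a t * b t ^ (1 - p)) ≤
        C * ∫⁻ t, vecNorm u (fun j => f j t) ^ p * (a t * b t ^ (1 - p)) := by
  by_cases h : u = ∞
  · obtain ⟨C, hC⟩ := weighted hp K
    refine ⟨C, fun a b ha hb f hf => ?_⟩
    simp only [vecNorm, if_pos h]
    refine le_trans ?_ (hC a b ha hb _ (Measurable.iSup hf))
    gcongr with t
    exact iSup_le fun j => MM_mono (fun s => le_iSup (fun j => f j s) j) t
  · have hr := toReal_gt hu h
    have hr0 : 0 < u.toReal := by linarith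
    obtain ⟨K', hK'⟩ := extrap hp hr K
    obtain ⟨C0, hC0⟩ := weighted hr K'
    obtain ⟨C, hC⟩ := hK' C0
    refine ⟨C, fun a b ha hb f hf => hC _ _ (measurable_vecNorm u fun j => measurable_MM _ _)
      (measurable_vecNorm u hf) (fun a b ha hb => ?_) a b ha hb⟩
    have hwm : Measurable fun t => a t * b t ^ (1 - u.toReal) := ha.meas.mul (hb.meas.pow_const _)
    simp only [vecNorm, if_neg h]
    simp_rw [← ENNReal.rpow_mul, one_div_mul_cancel hr0.ne', ENNReal.rpow_one,
      ← ENNReal.tsum_mul_right]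
    have e1 : ∀ j, AEMeasurable (fun t => MM volume (f j) t ^ u.toReal *
        (a t * b t ^ (1 - u.toReal))) volume := fun j =>
      (((measurable_MM _ _).pow_const _).mul hwm).aemeasurable
    have e2 : ∀ j, AEMeasurable (fun t => f j t ^ u.toReal *
        (a t * b t ^ (1 - u.toReal))) volume := fun j =>
      (((hf j).pow_const _).mul hwm).aemeasurable
    rw [lintegral_tsum e1, lintegral_tsum e2, ← ENNReal.tsum_mul_left]
    exact ENNReal.tsum_le_tsum fun j => hC0 a b ha hb _ (hf j)

/-- The maximal operator in one variable is bounded on the weighted `L^p` space of functions with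
values in the mixed-norm space of the other variables. The innermost exponents are reached one
at a time: for `p` equal to the next exponent this is Tonelli's theorem, and extrapolation
gives all other `p`. -/
lemma mixed_weighted {u : ℝ≥0∞} (hu : 1 < u) : ∀ (n : ℕ) (q : Fin n → ℝ≥0∞),
    (∀ i, 1 < q i ∧ q i < ∞) → ∀ (p : ℝ), 1 < p → ∀ K : ℝ≥0,
    ∃ C : ℝ≥0, ∀ a b, A1 K a → A1 K b → ∀ F : ℕ → ℝ → (Fin n → ℝ) → ℝ≥0∞,
      (∀ j, Measurable fun z : ℝ × (Fin n → ℝ) => F j z.1 z.2) →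
      ∫⁻ t, V n q u (fun j x => MM volume (fun s => F j s x) t) ^ p * (a t * b t ^ (1 - p)) ≤
        C * ∫⁻ t, V n q u (fun j x => F j t x) ^ p * (a t * b t ^ (1 - p))
  | 0, q, hq, p, hp, K => by
      obtain ⟨C, hC⟩ := vector_weighted hu hp K
      exact ⟨C, fun a b ha hb F hF => hC a b ha hb (fun j t => F j t finZeroElim)
        fun j => (hF j).comp (measurable_id.prodMk measurable_const)⟩
  | n + 1, q, hq, p, hp, K => by
      have hr := toReal_gt (hq (Fin.last n)).1 (hq (Fin.last n)).2.ne
      have hq' : ∀ i : Fin n, 1 < q i.castSucc ∧ q i.castSucc < ∞ := fun i => hq _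
      obtain ⟨K', hK'⟩ := extrap hp hr K
      obtain ⟨C0, hC0⟩ := mixed_weighted hu n (fun i => q i.castSucc) hq' _ hr K'
      obtain ⟨C, hC⟩ := hK' C0
      refine ⟨C, fun a b ha hb F hF => ?_⟩
      have hM : ∀ j, Measurable fun z : ℝ × (Fin (n + 1) → ℝ) =>
          MM volume (fun s => F j s z.2) z.1 := fun j =>
        (measurable_MM_param volume (F := fun (y : Fin (n + 1) → ℝ) s => F j s y)
          ((hF j).comp measurable_swap)).comp measurable_swap
      have hs : Measurable fun z : (ℝ × ℝ) × (Fin n → ℝ) =>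
          (z.1.1, (Fin.snoc z.2 z.1.2 : Fin (n + 1) → ℝ)) :=
        measurable_fst.fst.prodMk
          ((measurable_snoc n).comp (measurable_snd.prodMk measurable_fst.snd))
      refine hC _ _ (measurable_V hq u (F := fun t j x => MM volume (fun s => F j s x) t) hM)
        (measurable_V hq u (F := fun t j x => F j t x) hF) (fun a b ha hb => ?_) a b ha hb
      set r := (q (Fin.last n)).toReal with hrdef
      have hwm : Measurable fun t => a t * b t ^ (1 - r) := ha.meas.mul (hb.meas.pow_const _)
      have hswap : ∀ Φ : ℕ → ℝ → (Fin (n + 1) → ℝ) → ℝ≥0∞,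
          (∀ j, Measurable fun z : ℝ × (Fin (n + 1) → ℝ) => Φ j z.1 z.2) →
          ∫⁻ t, V (n + 1) q u (fun j x => Φ j t x) ^ r * (a t * b t ^ (1 - r)) =
          ∫⁻ s, ∫⁻ t, V n (fun i => q i.castSucc) u (fun j x => Φ j t (Fin.snoc x s)) ^ r *
            (a t * b t ^ (1 - r)) := by
        intro Φ hΦ
        have h1 : Measurable fun z : ℝ × ℝ =>
            V n (fun i => q i.castSucc) u (fun j x => Φ j z.1 (Fin.snoc x z.2)) ^ r :=
          (measurable_V hq' u (F := fun (z : ℝ × ℝ) j x => Φ j z.1 (Fin.snoc x z.2))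
            fun j => (hΦ j).comp hs).pow_const _
        rw [← lintegral_lintegral_swap (h1.mul (hwm.comp measurable_fst)).aemeasurable]
        refine lintegral_congr fun t => ?_
        rw [hrdef, V_succ_rpow hq, ← hrdef, lintegral_mul_const]
        exact h1.comp (measurable_const.prodMk measurable_id)
      rw [hswap (fun j t x => MM volume (fun s => F j s x) t) hM, hswap F hF,
        ← lintegral_const_mul' _ _ ENNReal.coe_ne_top]
      exact lintegral_mono fun s => hC0 a b ha hb (fun j t x => F j t (Fin.snoc x s))
        fun j => (hF j).comp ((measurable_fst).prodMk
          ((measurable_snoc n).comp (measurable_snd.prodMk measurable_const)))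

/-! ### The strong maximal operator -/

/-- The iterated one-dimensional maximal operator on `ℝ^n`: the maximal operator in the last
variable is applied after those in the other variables. -/
def S : (n : ℕ) → ((Fin n → ℝ) → ℝ≥0∞) → (Fin n → ℝ) → ℝ≥0∞
  | 0, g => g
  | n + 1, g => fun x =>
      MM volume (fun s => S n (fun y => g (Fin.snoc y s)) (Fin.init x)) (x (Fin.last n))

lemma measurable_init (n : ℕ) :
    Measurable fun x : Fin (n + 1) → ℝ => (Fin.init x : Fin n → ℝ) :=
  measurable_pi_iff.2 fun _ => measurable_pi_apply _

lemma measurable_S : ∀ (n : ℕ) (α : Type) [MeasurableSpace α] (g : α → (Fin n → ℝ) → ℝ≥0∞),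
    (Measurable fun z : α × (Fin n → ℝ) => g z.1 z.2) →
      Measurable fun z : α × (Fin n → ℝ) => S n (g z.1) z.2
  | 0, _, _, _, hg => hg
  | n + 1, α, _, g, hg => by
      have h := measurable_S n (α × ℝ) (fun z y => g z.1 (Fin.snoc y z.2))
        (hg.comp (measurable_fst.fst.prodMk
          ((measurable_snoc n).comp (measurable_snd.prodMk measurable_fst.snd))))
      have h2 := measurable_MM_param volume (α := α × (Fin n → ℝ))
        (F := fun z s => S n (fun y => g z.1 (Fin.snoc y s)) z.2)
        (h.comp ((measurable_fst.fst.prodMk measurable_snd).prodMk measurable_fst.snd))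
      exact h2.comp ((measurable_fst.prodMk ((measurable_init n).comp measurable_snd)).prodMk
        ((measurable_pi_apply (Fin.last n)).comp measurable_snd))

/-- The strong maximal operator is bounded on the mixed-norm space: the bound in `n` variables is
applied first, for each value of the last variable, and then the one-variable bound `mixed_weighted`
with weight `1` in the last variable. -/
lemma strong_bound {u : ℝ≥0∞} (hu : 1 < u) : ∀ (n : ℕ) (q : Fin n → ℝ≥0∞),
    (∀ i, 1 < q i ∧ q i < ∞) → ∃ C : ℝ≥0, ∀ F : ℕ → (Fin n → ℝ) → ℝ≥0∞,
      (∀ j, Measurable (F j)) → V n q u (fun j => S n (F j)) ≤ C * V n q u F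
  | 0, q, _ => ⟨1, fun F _ => by simp [S]⟩
  | n + 1, q, hq => by
      have hr := toReal_gt (hq (Fin.last n)).1 (hq (Fin.last n)).2.ne
      have hq' : ∀ i : Fin n, 1 < q i.castSucc ∧ q i.castSucc < ∞ := fun i => hq _
      obtain ⟨C1, hC1⟩ := strong_bound hu n (fun i => q i.castSucc) hq'
      obtain ⟨C2, hC2⟩ := mixed_weighted hu n (fun i => q i.castSucc) hq' _ hr 1
      set r := (q (Fin.last n)).toReal with hrdef
      have hr0 : 0 < r := by linarith
      refine ⟨C2 ^ (1 / r) * C1, fun F hF => ?_⟩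
      have hm : ∀ j, Measurable fun z : ℝ × (Fin n → ℝ) => F j (Fin.snoc z.2 z.1) := fun j =>
        (hF j).comp ((measurable_snoc n).comp measurable_swap)
      have h1 := hC2 _ _ A1_one A1_one
        (fun j s x => S n (fun y => F j (Fin.snoc y s)) x)
        fun j => measurable_S n ℝ (fun s y => F j (Fin.snoc y s)) (hm j)
      simp only [ENNReal.one_rpow, mul_one] at h1
      have h2 : V (n + 1) q u (fun j => S (n + 1) (F j)) ^ r ≤
          (C2 ^ (1 / r) * C1 * V (n + 1) q u F) ^ r := by
        calc V (n + 1) q u (fun j => S (n + 1) (F j)) ^ r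
            = ∫⁻ t, V n (fun i => q i.castSucc) u (fun j x => MM volume
                (fun s => S n (fun y => F j (Fin.snoc y s)) x) t) ^ r := by
              rw [hrdef, V_succ_rpow hq]
              simp only [S, Fin.init_snoc, Fin.snoc_last]
          _ ≤ C2 * ∫⁻ t, V n (fun i => q i.castSucc) u
                (fun j x => S n (fun y => F j (Fin.snoc y t)) x) ^ r := h1
          _ ≤ C2 * ∫⁻ t, (C1 * V n (fun i => q i.castSucc) u
                (fun j y => F j (Fin.snoc y t))) ^ r := by
              gcongr with t
              exact hC1 _ fun j => (hm j).comp (measurable_const.prodMk measurable_id)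
          _ = C2 * (C1 ^ r * V (n + 1) q u F ^ r) := by
              simp_rw [ENNReal.mul_rpow_of_nonneg _ _ hr0.le]
              rw [lintegral_const_mul' _ _ (ENNReal.rpow_ne_top_of_nonneg hr0.le
                ENNReal.coe_ne_top), hrdef, V_succ_rpow hq]
          _ = _ := by
              rw [ENNReal.mul_rpow_of_nonneg _ _ hr0.le, ENNReal.mul_rpow_of_nonneg _ _ hr0.le,
                ← ENNReal.rpow_mul, one_div_mul_cancel hr0.ne', ENNReal.rpow_one, mul_assoc]
      rw [ENNReal.coe_mul, ENNReal.coe_rpow_of_nonneg _ (by positivity)]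
      exact (ENNReal.rpow_le_rpow_iff hr0).1 h2

/-! ### Domination of the maximal operator over cubes -/

lemma exists_QI {c r : ℝ} (hr : 0 < r) :
    ∃ p, Icc (c - r) (c + r) ⊆ QI p ∧ volume (QI p) ≤ ENNReal.ofReal (4 * r) := by
  obtain ⟨a, ha1, ha2⟩ := exists_rat_btwn (show c - 2 * r < c - r by linarith)
  obtain ⟨b, hb1, hb2⟩ := exists_rat_btwn (show c + r < c + 2 * r by linarith)
  refine ⟨(a, b), fun t ht => ⟨ha2.trans_le ht.1, ht.2.trans_lt hb1⟩, ?_⟩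
  simp only [QI, Real.volume_Ioo]
  exact ENNReal.ofReal_le_ofReal (by linarith)

lemma measurableSet_cubeAt {n : ℕ} (c : Fin n → ℝ) (r : ℝ) : MeasurableSet (cubeAt c r) := by
  have : cubeAt c r = ⋂ i, {x | |x i - c i| ≤ r} := by ext; simp [cubeAt]
  rw [this]
  exact MeasurableSet.iInter fun i => measurableSet_le
    (((measurable_pi_apply i).sub_const _).abs) measurable_const

lemma volume_cubeAt {n : ℕ} (c : Fin n → ℝ) (r : ℝ) :
    volume (cubeAt c r) = ENNReal.ofReal (2 * r) ^ n := by
  have : cubeAt c r = Icc (fun i => c i - r) (fun i => c i + r) := by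
    ext x
    simp only [cubeAt, mem_ofPred_eq, mem_Icc, Pi.le_def, abs_le, ← forall_and]
    exact forall_congr' fun i => ⟨fun h => ⟨by linarith [h.1], by linarith [h.2]⟩,
      fun h => ⟨by linarith [h.1], by linarith [h.2]⟩⟩
  rw [this, Real.volume_Icc_pi]
  simp only [add_sub_sub_cancel, ← two_mul, Finset.prod_const, Finset.card_univ, Fintype.card_fin]

lemma lintegral_snoc (n : ℕ) {g : (Fin (n + 1) → ℝ) → ℝ≥0∞} (hg : Measurable g) :
    ∫⁻ x, g x = ∫⁻ s, ∫⁻ y : Fin n → ℝ, g (Fin.snoc y s) := by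
  have e := (volume_preserving_piFinSuccAbove (fun _ : Fin (n + 1) => ℝ) (Fin.last n)).symm
  have hge : Measurable fun z : ℝ × (Fin n → ℝ) =>
      g ((MeasurableEquiv.piFinSuccAbove (fun _ => ℝ) (Fin.last n)).symm z) := hg.comp e.measurable
  rw [← e.lintegral_comp hg, Measure.volume_eq_prod, lintegral_prod _ hge.aemeasurable]
  refine lintegral_congr fun s => lintegral_congr fun y => ?_
  congr 1
  exact Fin.insertNth_last' _ _

/-- On a cube containing `x` the integral of `g` is at most a multiple of `S n g x`, by Fubini's
theorem. The side `2 * r` is enlarged to `4 * r` since intervals with rational endpoints are used. -/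
lemma cube_le : ∀ (n : ℕ) (c x : Fin n → ℝ) {r : ℝ}, 0 < r → x ∈ cubeAt c r →
    ∀ g : (Fin n → ℝ) → ℝ≥0∞, Measurable g →
      ∫⁻ y in cubeAt c r, g y ≤ ENNReal.ofReal (4 * r) ^ n * S n g x
  | 0, c, x, r, _, _, g, _ => by
      calc ∫⁻ y in cubeAt c r, g y ≤ ∫⁻ y, g y := setLIntegral_le_lintegral _ _
        _ = ∫⁻ y : Fin 0 → ℝ, g x := lintegral_congr fun y => by rw [Subsingleton.elim y x]
        _ ≤ _ := by simp [S, volume_pi]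
  | n + 1, c, x, r, hr, hx, g, hg => by
      obtain ⟨P, hP, hPv⟩ := exists_QI (c := c (Fin.last n)) hr
      have hxP : x (Fin.last n) ∈ QI P := by
        have := abs_le.1 (hx (Fin.last n))
        exact hP ⟨by linarith [this.1], by linarith [this.2]⟩
      have hx' : (Fin.init x : Fin n → ℝ) ∈ cubeAt (Fin.init c) r := fun i => hx i.castSucc
      have hs : ∀ s, Measurable fun y : Fin n → ℝ => g (Fin.snoc y s) := fun s =>
        hg.comp ((measurable_snoc n).comp (measurable_id.prodMk measurable_const))
      set h : ℝ → ℝ≥0∞ := fun s => S n (fun y => g (Fin.snoc y s)) (Fin.init x) with hh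
      set d := ENNReal.ofReal (4 * r) with hd
      have key : ∀ s, ∫⁻ y : Fin n → ℝ, (cubeAt c r).indicator g (Fin.snoc y s) ≤
          (QI P).indicator (fun s => d ^ n * h s) s := by
        intro s
        by_cases hsP : s ∈ QI P
        · rw [indicator_of_mem hsP]
          refine le_trans ?_ (cube_le n (Fin.init c) (Fin.init x) hr hx' _ (hs s))
          rw [← lintegral_indicator (measurableSet_cubeAt _ _)]
          refine lintegral_mono fun y => ?_
          by_cases hy : (Fin.snoc y s : Fin (n + 1) → ℝ) ∈ cubeAt c r
          · have hy' : y ∈ cubeAt (Fin.init c : Fin n → ℝ) r := fun i => by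
              simpa [Fin.init] using hy i.castSucc
            rw [indicator_of_mem hy, indicator_of_mem hy']
          · rw [indicator_of_notMem hy]; exact zero_le
        · rw [indicator_of_notMem hsP, nonpos_iff_eq_zero]
          have : ∀ y : Fin n → ℝ, (cubeAt c r).indicator g (Fin.snoc y s) = 0 := by
            refine fun y => indicator_of_notMem (fun hy => hsP (hP ?_)) _
            have h1 := hy (Fin.last n)
            rw [Fin.snoc_last, abs_le] at h1
            exact ⟨by linarith [h1.1], by linarith [h1.2]⟩
          simp [this]
      calc ∫⁻ y in cubeAt c r, g y
          = ∫⁻ s, ∫⁻ y : Fin n → ℝ, (cubeAt c r).indicator g (Fin.snoc y s) := by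
            rw [← lintegral_indicator (measurableSet_cubeAt _ _),
              lintegral_snoc n (hg.indicator (measurableSet_cubeAt _ _))]
        _ ≤ ∫⁻ s in QI P, d ^ n * h s := by
            rw [← lintegral_indicator (measurableSet_QI P)]
            exact lintegral_mono key
        _ = d ^ n * (avg volume h P * volume (QI P)) := by
            rw [lintegral_const_mul' _ _ (ENNReal.pow_ne_top ENNReal.ofReal_ne_top), lintegral_QI hxP]
        _ ≤ d ^ n * (MM volume h (x (Fin.last n)) * d) := by
            gcongr; exact avg_le_MM hxP
        _ = d ^ (n + 1) * S (n + 1) g x := by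
            rw [pow_succ]; simp only [S, hh]; ring

lemma maximalE_le (n : ℕ) {g : (Fin n → ℝ) → ℝ≥0∞} (hg : Measurable g) (x : Fin n → ℝ) :
    maximalE g x ≤ 2 ^ n * S n g x := by
  refine iSup_le fun c => iSup_le fun r => iSup_le fun hr => iSup_le fun hx => ?_
  rw [volume_cubeAt]
  have h0 : ENNReal.ofReal (2 * r) ≠ 0 := by simpa using hr
  have h1 : ENNReal.ofReal (4 * r) = 2 * ENNReal.ofReal (2 * r) := by
    rw [← ENNReal.ofReal_ofNat 2, ← ENNReal.ofReal_mul (by norm_num)]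
    congr 1; ring
  calc (ENNReal.ofReal (2 * r) ^ n)⁻¹ * ∫⁻ y in cubeAt c r, g y
      ≤ (ENNReal.ofReal (2 * r) ^ n)⁻¹ * ((2 * ENNReal.ofReal (2 * r)) ^ n * S n g x) := by
        rw [← h1]; gcongr; exact cube_le n c x hr hx g hg
    _ = 2 ^ n * ((ENNReal.ofReal (2 * r) ^ n)⁻¹ * ENNReal.ofReal (2 * r) ^ n) * S n g x := by
        rw [mul_pow]; ring
    _ = _ := by
        rw [ENNReal.inv_mul_cancel (pow_ne_zero _ h0)
          (ENNReal.pow_ne_top ENNReal.ofReal_ne_top), mul_one]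

lemma vecNorm_single {u : ℝ≥0∞} (hu : 1 < u) {a : ℕ → ℝ≥0∞} (h : ∀ j, j ≠ 0 → a j = 0) :
    vecNorm u a = a 0 := by
  unfold vecNorm
  split_ifs with hu'
  · refine le_antisymm (iSup_le fun j => ?_) (le_iSup a 0)
    rcases eq_or_ne j 0 with rfl | hj
    · exact le_rfl
    · rw [h j hj]; exact zero_le
  · have h0 : 0 < u.toReal := by linarith [toReal_gt hu hu']
    rw [tsum_eq_single 0 fun j hj => by rw [h j hj, ENNReal.zero_rpow_of_pos h0],
      ← ENNReal.rpow_mul, mul_one_div_cancel h0.ne', ENNReal.rpow_one]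

end FSMax

/-- vector-valued Fefferman–Stein maximal inequality in mixed Lebesgue
spaces, together with the scalar boundedness of `M`. -/
theorem statement2 (n : ℕ) (q : Fin n → ℝ≥0∞) (u : ℝ≥0∞)
    (hq : ∀ i, 1 < q i ∧ q i < ∞) (hu : 1 < u) :
    ∃ C : ℝ≥0,
      (∀ f : (Fin n → ℝ) → ℝ, Measurable f →
        mixedNorm n q (maximal f) ≤ C * mixedNorm n q (fun x => (‖f x‖₊ : ℝ≥0∞))) ∧
      ∀ F : ℕ → (Fin n → ℝ) → ℝ, (∀ j, Measurable (F j)) →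
        mixedNorm n q (fun x => vecNorm u (fun j => maximal (F j) x)) ≤
          C * mixedNorm n q (fun x => vecNorm u (fun j => (‖F j x‖₊ : ℝ≥0∞))) := by
  obtain ⟨C, hC⟩ := FSMax.strong_bound hu n q hq
  have key : ∀ F : ℕ → (Fin n → ℝ) → ℝ, (∀ j, Measurable (F j)) →
      mixedNorm n q (fun x => vecNorm u (fun j => maximal (F j) x)) ≤
        (2 ^ n * C : ℝ≥0) * mixedNorm n q (fun x => vecNorm u (fun j => (‖F j x‖₊ : ℝ≥0∞))) := by
    intro F hF
    have hm : ∀ j, Measurable fun x => (‖F j x‖₊ : ℝ≥0∞) := fun j => (hF j).nnnorm.coe_nnreal_ennreal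
    calc mixedNorm n q (fun x => vecNorm u (fun j => maximal (F j) x))
        ≤ mixedNorm n q (fun x => 2 ^ n * vecNorm u
            (fun j => FSMax.S n (fun x => (‖F j x‖₊ : ℝ≥0∞)) x)) := by
          refine FSMax.mixedNorm_mono n q (fun i => (hq i).2.ne) fun x => ?_
          rw [← FSMax.vecNorm_const_mul hu]
          exact FSMax.vecNorm_mono u fun j => FSMax.maximalE_le n (hm j) x
      _ = 2 ^ n * FSMax.V n q u (fun j => FSMax.S n (fun x => (‖F j x‖₊ : ℝ≥0∞))) :=
          FSMax.mixedNorm_const_mul (by simp) n q hq _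
      _ ≤ 2 ^ n * (C * FSMax.V n q u (fun j x => (‖F j x‖₊ : ℝ≥0∞))) := by
          gcongr; exact hC _ hm
      _ = _ := by rw [← mul_assoc]; push_cast; rfl
  refine ⟨2 ^ n * C, fun f hf => ?_, key⟩
  -- the scalar inequality is the vector-valued one for the sequence `f, 0, 0, …`
  have h := key (fun j => if j = 0 then f else 0) fun j => by
    by_cases hj : j = 0
    · simpa [hj] using hf
    · simpa [hj] using measurable_zero
  have h1 : ∀ x, vecNorm u (fun j => maximal (if j = 0 then f else 0) x) = maximal f x := fun x =>
    FSMax.vecNorm_single hu fun j hj => by simp [hj, maximal, maximalE]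
  have h2 : ∀ x, vecNorm u (fun j => (‖(if j = 0 then f else 0) x‖₊ : ℝ≥0∞)) = ‖f x‖₊ := fun x =>
    FSMax.vecNorm_single hu fun j hj => by simp [hj]
  simp only [h1, h2] at h
  exact h
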